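/- arXiv:1805.03469 — 4 statements merged into one kernel-verified Lean document; each statement's English description precedes it below -/
import Mathlib

section
/- Let f(z) = ∑_{k=1}^∞ a_k z^{n_k} be analytic on 𝔻 where n_{k+1} ≥ λ n_k for some λ > 1 and all k. Then f ∈ BMOA if and only if ∑_{k=1}^∞ |a_k|² < ∞. -/
open MeasureTheory Complex Metric

/-- `f` belongs to `BMOA`: `f` is analytic on `𝔻` and
`sup_{a∈𝔻} ∫_𝔻 |f'(z)|² (1-|σ_a(z)|²) dA(z) < ∞`, where `σ_a(z) = (a-z)/(1-āz)`. -/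
def MemBMOA (f : ℂ → ℂ) : Prop :=
  DifferentiableOn ℂ f (Metric.ball 0 1) ∧
    ∃ C : ℝ, ∀ a ∈ Metric.ball (0 : ℂ) 1,
      (∫⁻ z in Metric.ball (0 : ℂ) 1,
          ENNReal.ofReal (‖deriv f z‖ ^ 2 *
            (1 - ‖(a - z) / (1 - (starRingEnd ℂ) a * z)‖ ^ 2))) ≤ ENNReal.ofReal C

/-!
Monomials are orthogonal for every radial measure, so `∫ w(|z|) |∑ bₘ zᵐ|²` is the sum of
`|bₘ|² ∫ w(|z|) |z|²ᵐ`. For `w = 1 - |z|²` and the series of `f'`, this makes the `BMOA` integral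
at the centre `a = 0` comparable to `∑ₘ≥₁ |bₘ|²`, which gives necessity for every power series.
For `w = |z|ᵐ` and the geometric series of `(1 - āz)⁻¹`, it shows that
`(1 - |a|²) ∫ nₖ |z|^(nₖ - 1) |1 - āz|⁻²` is bounded uniformly in `a` and `k`.

For sufficiency, `nₖ ≤ λ/(λ - 1) (nₖ - nₖ₋₁)` makes `(1 - r) ∑ nₖ r^(nₖ - 1)` at most a constant
times the telescoping sum of `r^nₖ₋₁ - r^nₖ`. By Cauchy–Schwarz `(1 - |z|²) |f'(z)|²` is then at
most a constant times `∑ |aₖ|² nₖ |z|^(nₖ - 1)`, which is integrated term by term against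
`(1 - |a|²) |1 - āz|⁻²`.
-/

open Filter Finset Real
open scoped ENNReal ComplexConjugate Topology

/-! ### Weighted Parseval identity on discs -/

section EnormSq

variable {E : Type*} [SeminormedAddCommGroup E]

lemma ofReal_norm_sq (w : E) : ENNReal.ofReal (‖w‖ ^ 2) = ‖w‖ₑ ^ 2 := by
  rw [ENNReal.ofReal_pow (norm_nonneg w), ofReal_norm]

lemma ofReal_one_sub_norm_sq (w : E) : ENNReal.ofReal (1 - ‖w‖ ^ 2) = 1 - ‖w‖ₑ ^ 2 := by
  rw [ENNReal.ofReal_sub _ (by positivity), ENNReal.ofReal_one, ofReal_norm_sq]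

end EnormSq

lemma lintegral_ball_eq_lintegral_circleMap {φ : ℂ → ℝ≥0∞} (hφ : Measurable φ) (R : ℝ) :
    ∫⁻ z in ball (0 : ℂ) R, φ z =
      ∫⁻ r in Set.Ioo 0 R, ENNReal.ofReal r *
        ∫⁻ θ in Set.Ioo (-π) π, φ (circleMap 0 r θ) := by
  have polarCoord_symm_eq (p : ℝ × ℝ) : Complex.polarCoord.symm p = circleMap 0 p.1 p.2 := by
    simp [circleMap, Complex.exp_mul_I]
  have measurable_circleMap : Measurable fun p : ℝ × ℝ => circleMap 0 p.1 p.2 := by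
    unfold circleMap; fun_prop
  have restrict_to_ball : ∀ p ∈ _root_.polarCoord.target,
      ENNReal.ofReal p.1 • (ball (0 : ℂ) R).indicator φ (Complex.polarCoord.symm p) =
        (Set.Ioo 0 R ×ˢ Set.univ).indicator
          (fun p => ENNReal.ofReal p.1 * φ (circleMap 0 p.1 p.2)) p := by
    rintro ⟨r, θ⟩ ⟨hr : 0 < r, -⟩
    simp [polarCoord_symm_eq, Set.indicator, hr, abs_of_pos hr]
  have target_inter : (Set.Ioo 0 R ×ˢ Set.univ) ∩ _root_.polarCoord.target =
      Set.Ioo 0 R ×ˢ Set.Ioo (-π) π := by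
    ext ⟨r, θ⟩
    simp only [polarCoord_target, Set.mem_inter_iff, Set.mem_prod, Set.mem_Ioo, Set.mem_univ,
      Set.mem_Ioi]
    tauto
  rw [← lintegral_indicator measurableSet_ball, ← Complex.lintegral_comp_polarCoord_symm,
    setLIntegral_congr_fun _root_.polarCoord.open_target.measurableSet restrict_to_ball,
    setLIntegral_indicator (measurableSet_Ioo.prod .univ), target_inter,
    Measure.volume_eq_prod, setLIntegral_prod _ (by fun_prop)]
  simp only [lintegral_const_mul' _ _ ENNReal.ofReal_ne_top]

lemma enorm_circleMap_zero {r : ℝ} (hr : 0 ≤ r) (θ : ℝ) :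
    ‖circleMap 0 r θ‖ₑ = ENNReal.ofReal r := by
  rw [← ofReal_norm, norm_circleMap_zero, abs_of_nonneg hr]

lemma lintegral_ball_comp_enorm {w : ℝ≥0∞ → ℝ≥0∞} (hw : Measurable w) (R : ℝ) :
    ∫⁻ z in ball (0 : ℂ) R, w ‖z‖ₑ =
      ENNReal.ofReal (2 * π) *
        ∫⁻ r in Set.Ioo 0 R, ENNReal.ofReal r * w (ENNReal.ofReal r) := by
  rw [lintegral_ball_eq_lintegral_circleMap (by fun_prop),
    ← lintegral_const_mul' _ _ ENNReal.ofReal_ne_top]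
  refine setLIntegral_congr_fun measurableSet_Ioo fun r hr => ?_
  simp only [enorm_circleMap_zero hr.1.le, lintegral_const, Measure.restrict_apply_univ,
    Real.volume_Ioo]
  ring_nf

lemma lintegral_ball_enorm_pow {R : ℝ} (hR : 0 ≤ R) (m : ℕ) :
    ∫⁻ z in ball (0 : ℂ) R, ‖z‖ₑ ^ m = ENNReal.ofReal (2 * π * R ^ (m + 2) / (m + 2)) := by
  have radial : ∫⁻ r in Set.Ioo 0 R, ENNReal.ofReal r * ENNReal.ofReal r ^ m =
      ENNReal.ofReal (R ^ (m + 2) / (m + 2)) := by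
    calc ∫⁻ r in Set.Ioo 0 R, ENNReal.ofReal r * ENNReal.ofReal r ^ m
        = ∫⁻ r in Set.Ioc 0 R, ENNReal.ofReal (r ^ (m + 1)) := by
          rw [restrict_Ioo_eq_restrict_Ioc]
          refine setLIntegral_congr_fun measurableSet_Ioc fun r hr => ?_
          rw [ENNReal.ofReal_pow hr.1.le, pow_succ']
      _ = ENNReal.ofReal (∫ r in 0..R, r ^ (m + 1)) := by
          rw [intervalIntegral.integral_of_le hR, ofReal_integral_eq_lintegral_ofReal]
          · exact (continuous_pow _).integrableOn_Ioc
          · exact ae_restrict_of_forall_mem measurableSet_Ioc fun r hr => pow_nonneg hr.1.le _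
      _ = ENNReal.ofReal (R ^ (m + 2) / (m + 2)) := by
          rw [integral_pow]
          norm_num [add_assoc]
  rw [lintegral_ball_comp_enorm (w := (· ^ m)) (by fun_prop), radial,
    ← ENNReal.ofReal_mul (by positivity), mul_div_assoc]

lemma lintegral_unitDisc_one_sub_sq_mul_pow (j : ℕ) :
    ∫⁻ z in ball (0 : ℂ) 1, (1 - ‖z‖ₑ ^ 2) * ‖z‖ₑ ^ (2 * j) =
      ENNReal.ofReal (π / ((j + 1) * (j + 2))) := by
  have moment (m : ℕ) := lintegral_ball_enorm_pow zero_le_one m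
  calc ∫⁻ z in ball (0 : ℂ) 1, (1 - ‖z‖ₑ ^ 2) * ‖z‖ₑ ^ (2 * j)
      = ∫⁻ z in ball (0 : ℂ) 1, (‖z‖ₑ ^ (2 * j) - ‖z‖ₑ ^ (2 * j + 2)) := by
        refine lintegral_congr fun z => ?_
        rw [ENNReal.sub_mul fun _ _ => ENNReal.pow_ne_top enorm_ne_top, one_mul, ← pow_add,
          add_comm 2]
    _ = ENNReal.ofReal (2 * π * 1 ^ (2 * j + 2) / ((2 * j : ℕ) + 2)) -
          ENNReal.ofReal (2 * π * 1 ^ (2 * j + 2 + 2) / ((2 * j + 2 : ℕ) + 2)) := by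
        rw [lintegral_sub (by fun_prop) (by rw [moment]; exact ENNReal.ofReal_ne_top),
          moment, moment]
        refine ae_restrict_of_forall_mem measurableSet_ball fun z hz => ?_
        refine pow_le_pow_right_of_le_one' ?_ (Nat.le_add_right _ _)
        simpa [← ofReal_norm] using (mem_ball_zero_iff.1 hz).le
    _ = ENNReal.ofReal (π / ((j + 1) * (j + 2))) := by
        rw [← ENNReal.ofReal_sub _ (by positivity)]
        congr 1
        push_cast
        field_simp
        ring

lemma circleAverage_norm_sq_sum_monomials (b : ℕ → ℂ) (s : Finset ℕ) (r : ℝ) :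
    circleAverage (fun z => ‖∑ m ∈ s, b m * z ^ m‖ ^ 2) 0 r = ∑ m ∈ s, ‖b m * r ^ m‖ ^ 2 := by
  set p : Polynomial ℂ := ∑ m ∈ s, Polynomial.monomial m (b m * r ^ m) with hp
  have coeff_p (m : ℕ) : p.coeff m = if m ∈ s then b m * r ^ m else 0 := by
    simp [hp, Polynomial.finsetSum_coeff, Polynomial.coeff_monomial]
  have eval_p (z : ℂ) : p.eval z = ∑ m ∈ s, b m * (r * z) ^ m := by
    simp [hp, Polynomial.eval_finsetSum, Polynomial.eval_monomial, mul_pow, mul_assoc]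
  have support_subset : p.support ⊆ s := fun m hm => by
    by_contra hms
    exact Polynomial.mem_support_iff.1 hm (by rw [coeff_p, if_neg hms])
  rw [circleAverage_eq_circleAverage_zero_one]
  simp only [add_zero, ← eval_p]
  rw [← Polynomial.sum_sq_norm_coeff_eq_circleAverage, sum_subset support_subset fun m _ hm => by
    rw [Polynomial.notMem_support_iff.1 hm, norm_zero, zero_pow two_ne_zero]]
  exact sum_congr rfl fun m hm => by rw [coeff_p, if_pos hm]

lemma hasSum_norm_sq_circleAverage {F : ℂ → ℂ} {b : ℕ → ℂ} {r : ℝ}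
    (hF : ∀ z ∈ sphere (0 : ℂ) |r|, HasSum (fun m => b m * z ^ m) (F z)) :
    HasSum (fun m => ‖b m * r ^ m‖ ^ 2) (circleAverage (fun z => ‖F z‖ ^ 2) 0 r) := by
  have summable_norm : Summable fun m => ‖b m * r ^ m‖ := (hF r (by simp)).summable.norm
  have norm_partialSum_le (N : ℕ) (θ : ℝ) :
      ‖∑ m ∈ range N, b m * circleMap 0 r θ ^ m‖ ≤ ∑' m, ‖b m * r ^ m‖ := by
    calc ‖∑ m ∈ range N, b m * circleMap 0 r θ ^ m‖
        ≤ ∑ m ∈ range N, ‖b m * circleMap 0 r θ ^ m‖ := norm_sum_le _ _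
      _ = ∑ m ∈ range N, ‖b m * r ^ m‖ := by simp
      _ ≤ ∑' m, ‖b m * r ^ m‖ := summable_norm.sum_le_tsum _ fun _ _ => norm_nonneg _
  rw [hasSum_iff_tendsto_nat_of_nonneg fun m => by positivity]
  simp only [← circleAverage_norm_sq_sum_monomials, circleAverage_def]
  refine (intervalIntegral.tendsto_integral_filter_of_dominated_convergence
    (fun _ => (∑' m, ‖b m * r ^ m‖) ^ 2) ?_ ?_ intervalIntegrable_const ?_).const_smul _
  · exact .of_forall fun N => Continuous.aestronglyMeasurable (by fun_prop)
  · refine .of_forall fun N => ae_of_all _ fun θ _ => ?_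
    rw [norm_pow, norm_norm]
    gcongr
    exact norm_partialSum_le N θ
  · exact ae_of_all _ fun θ _ => ((hF _ (by simp)).tendsto_sum_nat.norm.pow 2)

lemma lintegral_circleMap_enorm_sq {F : ℂ → ℂ} {b : ℕ → ℂ} {r : ℝ}
    (hF : ∀ z ∈ sphere (0 : ℂ) |r|, HasSum (fun m => b m * z ^ m) (F z)) :
    ∫⁻ θ in Set.Ioo (-π) π, ‖F (circleMap 0 r θ)‖ₑ ^ 2 =
      ENNReal.ofReal (2 * π) * ∑' m, ‖b m * r ^ m‖ₑ ^ 2 := by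
  have parseval := hasSum_norm_sq_circleAverage hF
  have continuous_F : Continuous fun θ => F (circleMap 0 r θ) := by
    have : Continuous fun θ => ∑' m, b m * circleMap 0 r θ ^ m :=
      continuous_tsum (by fun_prop) (hF r (by simp)).summable.norm (by simp)
    exact this.congr fun θ => (hF _ (by simp)).tsum_eq
  have integral_eq : ∫ θ in -π..π, ‖F (circleMap 0 r θ)‖ ^ 2 =
      2 * π * ∑' m, ‖b m * r ^ m‖ ^ 2 := by
    rw [parseval.tsum_eq, circleAverage_eq_integral_add (-π),
      intervalIntegral.integral_comp_add_right (fun θ => ‖F (circleMap 0 r θ)‖ ^ 2), smul_eq_mul,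
      mul_inv_cancel_left₀ two_pi_pos.ne']
    ring_nf
  simp only [← ofReal_norm_sq]
  rw [← ENNReal.ofReal_tsum_of_nonneg (fun _ => by positivity) parseval.summable,
    ← ENNReal.ofReal_mul two_pi_pos.le, ← integral_eq,
    intervalIntegral.integral_of_le (by linarith [pi_pos]), ← restrict_Ioo_eq_restrict_Ioc,
    ofReal_integral_eq_lintegral_ofReal]
  · exact (continuous_F.norm.pow 2).integrableOn_Icc.mono_set Set.Ioo_subset_Icc_self
  · exact ae_of_all _ fun θ => by positivity

lemma lintegral_ball_radial_mul_enorm_sq {F : ℂ → ℂ} {b : ℕ → ℂ} {R : ℝ} {w : ℝ≥0∞ → ℝ≥0∞}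
    (hw : Measurable w) (hF_meas : Measurable F)
    (hF : ∀ z ∈ ball (0 : ℂ) R, HasSum (fun m => b m * z ^ m) (F z)) :
    ∫⁻ z in ball (0 : ℂ) R, w ‖z‖ₑ * ‖F z‖ₑ ^ 2 =
      ∑' m, ‖b m‖ₑ ^ 2 * ∫⁻ z in ball (0 : ℂ) R, w ‖z‖ₑ * ‖z‖ₑ ^ (2 * m) := by
  calc ∫⁻ z in ball (0 : ℂ) R, w ‖z‖ₑ * ‖F z‖ₑ ^ 2
      = ∫⁻ r in Set.Ioo 0 R, ∑' m, ‖b m‖ₑ ^ 2 * (ENNReal.ofReal (2 * π) *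
          (ENNReal.ofReal r * (w (ENNReal.ofReal r) * ENNReal.ofReal r ^ (2 * m)))) := by
        rw [lintegral_ball_eq_lintegral_circleMap (by fun_prop)]
        refine setLIntegral_congr_fun measurableSet_Ioo fun r hr => ?_
        have hF_sphere : ∀ z ∈ sphere (0 : ℂ) |r|, HasSum (fun m => b m * z ^ m) (F z) :=
          fun z hz => hF z (sphere_subset_ball (by rw [abs_of_pos hr.1]; exact hr.2) hz)
        simp only [enorm_circleMap_zero hr.1.le]
        rw [lintegral_const_mul _ (by fun_prop),
          lintegral_circleMap_enorm_sq hF_sphere]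
        simp only [← ENNReal.tsum_mul_left]
        refine tsum_congr fun m => ?_
        rw [enorm_mul, enorm_pow, ← ofReal_norm (r : ℂ), Complex.norm_of_nonneg hr.1.le]
        ring
    _ = ∑' m, ‖b m‖ₑ ^ 2 * ∫⁻ z in ball (0 : ℂ) R, w ‖z‖ₑ * ‖z‖ₑ ^ (2 * m) := by
        rw [lintegral_tsum fun m => by fun_prop]
        refine tsum_congr fun m => ?_
        rw [lintegral_ball_comp_enorm (w := fun t => w t * t ^ (2 * m)) (by fun_prop),
          ← lintegral_const_mul' _ _ ENNReal.ofReal_ne_top, lintegral_const_mul _ (by fun_prop)]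

/-! ### Derivatives of power series -/

lemma differentiableAt_and_hasSum_deriv_of_hasSum_mul_pow {ι : Type*} {a : ι → ℂ} {n : ι → ℕ}
    {f : ℂ → ℂ} {R : ℝ}
    (hf : ∀ z ∈ ball (0 : ℂ) R, HasSum (fun k => a k * z ^ n k) (f z)) {z : ℂ}
    (hz : z ∈ ball (0 : ℂ) R) :
    DifferentiableAt ℂ f z ∧ HasSum (fun k => a k * (n k * z ^ (n k - 1))) (deriv f z) := by
  obtain ⟨ρ, hzρ, hρR⟩ := exists_between (mem_ball_zero_iff.1 hz)
  have hρ : 0 < ρ := (norm_nonneg z).trans_lt hzρ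
  have summable_bound : Summable fun k => ‖a k‖ * ρ ^ n k := by
    simpa [abs_of_pos hρ] using (hf ρ (by simpa [abs_of_pos hρ] using hρR)).summable.norm
  have norm_le_bound : ∀ k, ∀ w ∈ ball (0 : ℂ) ρ, ‖a k * w ^ n k‖ ≤ ‖a k‖ * ρ ^ n k := by
    intro k w hw
    rw [norm_mul, norm_pow]
    gcongr
    exact (mem_ball_zero_iff.1 hw).le
  have differentiable_term (k : ι) : DifferentiableOn ℂ (fun z => a k * z ^ n k) (ball 0 ρ) := by
    fun_prop
  have mem_nhds : ball (0 : ℂ) ρ ∈ 𝓝 z := isOpen_ball.mem_nhds (mem_ball_zero_iff.2 hzρ)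
  have eventuallyEq_tsum : f =ᶠ[𝓝 z] fun w => ∑' k, a k * w ^ n k := by
    filter_upwards [mem_nhds] with w hw
    exact (hf w (ball_subset_ball hρR.le hw)).tsum_eq.symm
  constructor
  · exact ((differentiableOn_tsum_of_summable_norm summable_bound differentiable_term isOpen_ball
      norm_le_bound).differentiableAt mem_nhds).congr_of_eventuallyEq eventuallyEq_tsum
  · simpa [eventuallyEq_tsum.deriv_eq] using hasSum_deriv_of_summable_norm summable_bound
      differentiable_term isOpen_ball norm_le_bound (mem_of_mem_nhds mem_nhds)

lemma hasSum_deriv_of_hasSum_pow {b : ℕ → ℂ} {f : ℂ → ℂ} {R : ℝ}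
    (hf : ∀ z ∈ ball (0 : ℂ) R, HasSum (fun m => b m * z ^ m) (f z)) {z : ℂ}
    (hz : z ∈ ball (0 : ℂ) R) :
    HasSum (fun j => (j + 1) * b (j + 1) * z ^ j) (deriv f z) := by
  have hderiv := (differentiableAt_and_hasSum_deriv_of_hasSum_mul_pow (n := id) hf hz).2
  rw [← hasSum_nat_add_iff' 1] at hderiv
  simpa [mul_assoc, mul_left_comm] using hderiv

lemma lintegral_unitDisc_enorm_deriv_sq {b : ℕ → ℂ} {f : ℂ → ℂ}
    (hf : ∀ z ∈ ball (0 : ℂ) 1, HasSum (fun m => b m * z ^ m) (f z)) :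
    ∫⁻ z in ball (0 : ℂ) 1, (1 - ‖z‖ₑ ^ 2) * ‖deriv f z‖ₑ ^ 2 =
      ∑' j : ℕ, ENNReal.ofReal (π * ((j + 1) / (j + 2)) * ‖b (j + 1)‖ ^ 2) := by
  rw [lintegral_ball_radial_mul_enorm_sq (w := fun t => 1 - t ^ 2) (by fun_prop)
    (measurable_deriv f) fun z hz => hasSum_deriv_of_hasSum_pow hf hz]
  refine tsum_congr fun j => ?_
  rw [lintegral_unitDisc_one_sub_sq_mul_pow, ← ofReal_norm_sq, ← ENNReal.ofReal_mul (by positivity)]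
  congr 1
  have norm_succ : ‖(j + 1 : ℂ)‖ = j + 1 := by exact_mod_cast Complex.norm_natCast (j + 1)
  rw [norm_mul, norm_succ]
  field_simp

lemma summable_norm_sq_of_lintegral_deriv_ne_top {b : ℕ → ℂ} {f : ℂ → ℂ}
    (hf : ∀ z ∈ ball (0 : ℂ) 1, HasSum (fun m => b m * z ^ m) (f z))
    (hfin : ∫⁻ z in ball (0 : ℂ) 1, (1 - ‖z‖ₑ ^ 2) * ‖deriv f z‖ₑ ^ 2 ≠ ∞) :
    Summable fun m => ‖b m‖ ^ 2 := by
  rw [lintegral_unitDisc_enorm_deriv_sq hf] at hfin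
  rw [← summable_nat_add_iff 1]
  have summable_weighted : Summable fun j : ℕ => π * ((j + 1) / (j + 2)) * ‖b (j + 1)‖ ^ 2 :=
    (ENNReal.summable_toReal hfin).congr fun j => ENNReal.toReal_ofReal (by positivity)
  refine .of_nonneg_of_le (fun j => by positivity) (fun j => ?_) summable_weighted
  have one_le_weight : 1 ≤ π * (((j : ℝ) + 1) / (j + 2)) := by
    rw [← mul_div_assoc, one_le_div (by positivity)]
    nlinarith [pi_gt_three, (Nat.cast_nonneg j : (0 : ℝ) ≤ j)]
  exact le_mul_of_one_le_left (by positivity) one_le_weight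

lemma hasSum_extend_mul_pow {ι R : Type*} [Semiring R] [TopologicalSpace R] {a : ι → R}
    {n : ι → ℕ} (hn : n.Injective) {z w : R} (h : HasSum (fun k => a k * z ^ n k) w) :
    HasSum (fun m => Function.extend n a 0 m * z ^ m) w := by
  rw [← hn.hasSum_iff fun m hm => by simp [Function.extend_apply' _ _ _ hm]]
  simpa [Function.comp_def, hn.extend_apply] using h

/-! ### The Möbius kernel -/

lemma one_sub_norm_sq_moebius {b z : ℂ} (h : 1 - conj b * z ≠ 0) :
    1 - ‖(b - z) / (1 - conj b * z)‖ ^ 2 =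
      (1 - ‖b‖ ^ 2) * ((1 - ‖z‖ ^ 2) * ‖(1 - conj b * z)⁻¹‖ ^ 2) := by
  have numerator_identity :
      ‖1 - conj b * z‖ ^ 2 - ‖b - z‖ ^ 2 = (1 - ‖b‖ ^ 2) * (1 - ‖z‖ ^ 2) := by
    simp only [← Complex.normSq_eq_norm_sq, Complex.normSq_apply, Complex.sub_re, Complex.sub_im,
      Complex.mul_re, Complex.mul_im, Complex.conj_re, Complex.conj_im, Complex.one_re,
      Complex.one_im]
    ring
  rw [← mul_assoc, ← numerator_identity, norm_div, norm_inv, div_pow, inv_pow, sub_mul,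
    mul_inv_cancel₀ (pow_ne_zero 2 (norm_ne_zero_iff.2 h)), div_eq_mul_inv]

lemma ofReal_norm_sq_mul_one_sub_norm_sq_moebius {b z : ℂ} (hb : ‖b‖ < 1) (hz : ‖z‖ < 1) (w : ℂ) :
    ENNReal.ofReal (‖w‖ ^ 2 * (1 - ‖(b - z) / (1 - conj b * z)‖ ^ 2)) =
      (1 - ‖b‖ₑ ^ 2) * ((1 - ‖z‖ₑ ^ 2) * ‖w‖ₑ ^ 2 * ‖(1 - conj b * z)⁻¹‖ₑ ^ 2) := by
  have one_sub_ne_zero : 1 - conj b * z ≠ 0 := by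
    intro h
    have : ‖conj b * z‖ = 1 := by rw [← sub_eq_zero.1 h, norm_one]
    rw [norm_mul, RCLike.norm_conj] at this
    nlinarith [norm_nonneg b, norm_nonneg z]
  have one_sub_sq_nonneg {u : ℂ} (hu : ‖u‖ < 1) : 0 ≤ 1 - ‖u‖ ^ 2 := by
    nlinarith [norm_nonneg u]
  rw [one_sub_norm_sq_moebius one_sub_ne_zero, ENNReal.ofReal_mul (by positivity),
    ENNReal.ofReal_mul (one_sub_sq_nonneg hb), ENNReal.ofReal_mul (one_sub_sq_nonneg hz)]
  simp only [ofReal_norm_sq, ofReal_one_sub_norm_sq]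
  ring

lemma memBMOA_iff {f : ℂ → ℂ} :
    MemBMOA f ↔ DifferentiableOn ℂ f (ball 0 1) ∧
      ∃ C : ℝ≥0∞, C ≠ ∞ ∧ ∀ b ∈ ball (0 : ℂ) 1, (1 - ‖b‖ₑ ^ 2) * ∫⁻ z in ball (0 : ℂ) 1,
        (1 - ‖z‖ₑ ^ 2) * ‖deriv f z‖ₑ ^ 2 * ‖(1 - conj b * z)⁻¹‖ₑ ^ 2 ≤ C := by
  have garsia_eq {b : ℂ} (hb : b ∈ ball (0 : ℂ) 1) :
      ∫⁻ z in ball (0 : ℂ) 1,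
          ENNReal.ofReal (‖deriv f z‖ ^ 2 * (1 - ‖(b - z) / (1 - conj b * z)‖ ^ 2)) =
        (1 - ‖b‖ₑ ^ 2) * ∫⁻ z in ball (0 : ℂ) 1,
          (1 - ‖z‖ₑ ^ 2) * ‖deriv f z‖ₑ ^ 2 * ‖(1 - conj b * z)⁻¹‖ₑ ^ 2 := by
    rw [← lintegral_const_mul' _ _ (ENNReal.sub_ne_top ENNReal.one_ne_top)]
    exact setLIntegral_congr_fun measurableSet_ball fun z hz =>
      ofReal_norm_sq_mul_one_sub_norm_sq_moebius (mem_ball_zero_iff.1 hb) (mem_ball_zero_iff.1 hz) _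
  refine and_congr_right fun _ => ⟨fun ⟨C, hC⟩ => ?_, fun ⟨C, hC_top, hC⟩ => ?_⟩
  · exact ⟨ENNReal.ofReal C, ENNReal.ofReal_ne_top, fun b hb => garsia_eq hb ▸ hC b hb⟩
  · refine ⟨C.toReal, fun b hb => ?_⟩
    rw [ENNReal.ofReal_toReal hC_top, garsia_eq hb]
    exact hC b hb

lemma MemBMOA.summable_norm_sq {b : ℕ → ℂ} {f : ℂ → ℂ} (h : MemBMOA f)
    (hf : ∀ z ∈ ball (0 : ℂ) 1, HasSum (fun m => b m * z ^ m) (f z)) :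
    Summable fun m => ‖b m‖ ^ 2 := by
  obtain ⟨-, C, hC_top, hC⟩ := memBMOA_iff.1 h
  refine summable_norm_sq_of_lintegral_deriv_ne_top hf (ne_top_of_le_ne_top hC_top ?_)
  simpa using hC 0 (mem_ball_self one_pos)

lemma lintegral_unitDisc_pow_mul_inv_one_sub_le {b : ℂ} (hb : ‖b‖ < 1) (m : ℕ) :
    ∫⁻ z in ball (0 : ℂ) 1, ‖z‖ₑ ^ m * ‖(1 - b * z)⁻¹‖ₑ ^ 2 ≤
      ENNReal.ofReal (2 * π / (m + 2)) * (1 - ‖b‖ₑ ^ 2)⁻¹ := by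
  have hasSum_geometric : ∀ z ∈ ball (0 : ℂ) 1, HasSum (fun j => b ^ j * z ^ j) (1 - b * z)⁻¹ := by
    intro z hz
    simp only [← mul_pow]
    refine hasSum_geometric_of_norm_lt_one ?_
    rw [norm_mul]
    nlinarith [norm_nonneg b, norm_nonneg z, mem_ball_zero_iff.1 hz]
  calc ∫⁻ z in ball (0 : ℂ) 1, ‖z‖ₑ ^ m * ‖(1 - b * z)⁻¹‖ₑ ^ 2
      = ∑' j, ‖b ^ j‖ₑ ^ 2 * ∫⁻ z in ball (0 : ℂ) 1, ‖z‖ₑ ^ m * ‖z‖ₑ ^ (2 * j) :=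
        lintegral_ball_radial_mul_enorm_sq (w := (· ^ m)) (by fun_prop) (by fun_prop)
          hasSum_geometric
    _ ≤ ∑' j, ENNReal.ofReal (2 * π / (m + 2)) * (‖b‖ₑ ^ 2) ^ j := by
        refine ENNReal.tsum_le_tsum fun j => ?_
        simp only [← pow_add]
        rw [lintegral_ball_enorm_pow zero_le_one, one_pow, mul_one, enorm_pow, ← pow_mul, ← pow_mul,
          mul_comm j, mul_comm]
        gcongr
        exact Nat.le_add_right _ _
    _ = ENNReal.ofReal (2 * π / (m + 2)) * (1 - ‖b‖ₑ ^ 2)⁻¹ := by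
        rw [ENNReal.tsum_mul_left, ENNReal.tsum_geometric]

lemma one_sub_mul_lintegral_pow_mul_inv_one_sub_le {b : ℂ} (hb : ‖b‖ < 1) (n : ℕ) :
    (1 - ‖b‖ₑ ^ 2) * (n * ∫⁻ z in ball (0 : ℂ) 1, ‖z‖ₑ ^ (n - 1) * ‖(1 - b * z)⁻¹‖ₑ ^ 2) ≤
      ENNReal.ofReal (2 * π) := by
  have one_sub_ne_zero : 1 - ‖b‖ₑ ^ 2 ≠ 0 := by
    have : ‖b‖ₑ < 1 := by rwa [← ofReal_norm, ENNReal.ofReal_lt_one]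
    exact (tsub_pos_of_lt (pow_lt_one₀ zero_le this two_ne_zero)).ne'
  have mul_moment_le : (n : ℝ) * (2 * π / ((n - 1 : ℕ) + 2)) ≤ 2 * π := by
    have : (n : ℝ) ≤ (n - 1 : ℕ) + 2 := by exact_mod_cast (by lia : n ≤ n - 1 + 2)
    rw [mul_div_assoc', div_le_iff₀ (by positivity), mul_comm]
    gcongr
  calc (1 - ‖b‖ₑ ^ 2) * (n * ∫⁻ z in ball (0 : ℂ) 1, ‖z‖ₑ ^ (n - 1) * ‖(1 - b * z)⁻¹‖ₑ ^ 2)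
      ≤ (1 - ‖b‖ₑ ^ 2) * (n * (ENNReal.ofReal (2 * π / ((n - 1 : ℕ) + 2)) *
          (1 - ‖b‖ₑ ^ 2)⁻¹)) := by
        gcongr
        exact lintegral_unitDisc_pow_mul_inv_one_sub_le hb (n - 1)
    _ = (1 - ‖b‖ₑ ^ 2) * (1 - ‖b‖ₑ ^ 2)⁻¹ * ENNReal.ofReal (n * (2 * π / ((n - 1 : ℕ) + 2))) := by
        rw [ENNReal.ofReal_mul n.cast_nonneg, ENNReal.ofReal_natCast]
        ring
    _ ≤ ENNReal.ofReal (2 * π) := by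
        rw [ENNReal.mul_inv_cancel one_sub_ne_zero (ENNReal.sub_ne_top ENNReal.one_ne_top), one_mul]
        exact ENNReal.ofReal_le_ofReal mul_moment_le

/-! ### Lacunary series -/

/-- Hadamard gap sequences with ratio `lam`, the exponents of lacunary power series. The value `0`
is allowed, so such a sequence need not be injective. -/
structure IsLacunary (lam : ℝ) (n : ℕ → ℕ) : Prop where
  one_lt : 1 < lam
  mul_le_succ : ∀ k, lam * n k ≤ n (k + 1)

lemma one_sub_mul_sub_mul_pow_le {r : ℝ} (h0 : 0 ≤ r) (h1 : r ≤ 1) {m n : ℕ} (hmn : m ≤ n) :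
    (1 - r) * ((n - m) * r ^ (n - 1)) ≤ r ^ m - r ^ n := by
  have card_mul_le : (n - m) * r ^ (n - 1) ≤ ∑ i ∈ Ico m n, r ^ i := by
    rw [← Nat.cast_sub hmn, ← Nat.card_Ico, ← nsmul_eq_mul]
    refine card_nsmul_le_sum _ _ _ fun i hi => pow_le_pow_of_le_one h0 h1 ?_
    exact Nat.le_sub_one_of_lt (mem_Ico.1 hi).2
  rw [← geom_sum_Ico_mul_neg r hmn, mul_comm _ (1 - r)]
  exact mul_le_mul_of_nonneg_left card_mul_le (sub_nonneg.2 h1)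

namespace IsLacunary

variable {lam : ℝ} {n : ℕ → ℕ}

lemma monotone (h : IsLacunary lam n) : Monotone n :=
  monotone_nat_of_le_succ fun k => by
    exact_mod_cast (le_mul_of_one_le_left (n k).cast_nonneg h.one_lt.le).trans (h.mul_le_succ k)

lemma strictMono (h : IsLacunary lam n) (h0 : 0 < n 0) : StrictMono n :=
  strictMono_nat_of_lt_succ fun k => by
    have pos : (0 : ℝ) < n k := by exact_mod_cast h0.trans_le (h.monotone k.zero_le)
    exact_mod_cast (lt_mul_of_one_lt_left pos h.one_lt).trans_le (h.mul_le_succ k)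

lemma one_sub_mul_sum_mul_pow_le (h : IsLacunary lam n) {r : ℝ} (h0 : 0 ≤ r) (h1 : r ≤ 1) (N : ℕ) :
    (lam - 1) * ((1 - r) * ∑ k ∈ range N, n k * r ^ (n k - 1)) ≤ lam := by
  have one_lt := h.one_lt
  have term_le {m k : ℕ} (hm : lam * m ≤ n k) (hmk : m ≤ n k) :
      (lam - 1) * ((1 - r) * (n k * r ^ (n k - 1))) ≤ lam * (r ^ m - r ^ n k) := by
    calc (lam - 1) * ((1 - r) * (n k * r ^ (n k - 1)))
        = ((1 - r) * r ^ (n k - 1)) * ((lam - 1) * n k) := by ring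
      _ ≤ ((1 - r) * r ^ (n k - 1)) * (lam * (n k - m)) := by
          have : 0 ≤ 1 - r := sub_nonneg.2 h1
          refine mul_le_mul_of_nonneg_left ?_ (by positivity)
          linarith
      _ = lam * ((1 - r) * ((n k - m) * r ^ (n k - 1))) := by ring
      _ ≤ lam * (r ^ m - r ^ n k) := by
          gcongr
          exact one_sub_mul_sub_mul_pow_le h0 h1 hmk
  have telescope (N : ℕ) : (lam - 1) * ((1 - r) * ∑ k ∈ range (N + 1), n k * r ^ (n k - 1)) ≤
      lam * (1 - r ^ n N) := by
    induction N with
    | zero => simpa using term_le (m := 0) (k := 0) (by simp) (Nat.zero_le _)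
    | succ N ih =>
      rw [sum_range_succ, mul_add, mul_add]
      linarith [term_le (h.mul_le_succ N) (h.monotone N.le_succ)]
  cases N with
  | zero => simpa using (zero_lt_one.trans one_lt).le
  | succ N => exact (telescope N).trans (mul_le_of_le_one_right (by linarith)
      (sub_le_self _ (pow_nonneg h0 _)))

lemma one_sub_mul_norm_sum_sq_le (h : IsLacunary lam n) (a : ℕ → ℂ) {z : ℂ} (hz : ‖z‖ ≤ 1) (N : ℕ) :
    (1 - ‖z‖ ^ 2) * ‖∑ k ∈ range N, a k * (n k * z ^ (n k - 1))‖ ^ 2 ≤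
      2 * lam / (lam - 1) * ∑ k ∈ range N, ‖a k‖ ^ 2 * (n k * ‖z‖ ^ (n k - 1)) := by
  have sub_one_pos : 0 < lam - 1 := sub_pos.2 h.one_lt
  set S := ∑ k ∈ range N, n k * ‖z‖ ^ (n k - 1)
  set Q := ∑ k ∈ range N, ‖a k‖ ^ 2 * (n k * ‖z‖ ^ (n k - 1))
  have cauchy_schwarz : ‖∑ k ∈ range N, a k * (n k * z ^ (n k - 1))‖ ^ 2 ≤ Q * S := by
    calc ‖∑ k ∈ range N, a k * (n k * z ^ (n k - 1))‖ ^ 2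
        ≤ (∑ k ∈ range N, ‖a k * (n k * z ^ (n k - 1))‖) ^ 2 := by
          gcongr
          exact norm_sum_le _ _
      _ ≤ Q * S := by
          refine sum_sq_le_sum_mul_sum_of_sq_le_mul _ (fun k _ => by positivity)
            (fun k _ => by positivity) fun k _ => le_of_eq ?_
          rw [norm_mul, norm_mul, norm_pow, Complex.norm_natCast]
          ring
  have gap_bound : (1 - ‖z‖) * S ≤ lam / (lam - 1) := by
    rw [le_div_iff₀' sub_one_pos]
    exact h.one_sub_mul_sum_mul_pow_le (norm_nonneg z) hz N
  have one_sub_sq_le : 1 - ‖z‖ ^ 2 ≤ 2 * (1 - ‖z‖) := by nlinarith [sq_nonneg (1 - ‖z‖)]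
  calc (1 - ‖z‖ ^ 2) * ‖∑ k ∈ range N, a k * (n k * z ^ (n k - 1))‖ ^ 2
      ≤ 2 * (1 - ‖z‖) * (Q * S) := by gcongr
    _ = 2 * ((1 - ‖z‖) * S) * Q := by ring
    _ ≤ 2 * (lam / (lam - 1)) * Q := by gcongr
    _ = 2 * lam / (lam - 1) * Q := by rw [mul_div_assoc]

lemma one_sub_mul_enorm_sq_le_tsum (h : IsLacunary lam n) {a : ℕ → ℂ} {z w : ℂ} (hz : ‖z‖ ≤ 1)
    (hw : HasSum (fun k => a k * (n k * z ^ (n k - 1))) w) :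
    (1 - ‖z‖ₑ ^ 2) * ‖w‖ₑ ^ 2 ≤
      ENNReal.ofReal (2 * lam / (lam - 1)) * ∑' k, ‖a k‖ₑ ^ 2 * (n k * ‖z‖ₑ ^ (n k - 1)) := by
  have ratio_nonneg : 0 ≤ 2 * lam / (lam - 1) :=
    div_nonneg (by linarith [h.one_lt]) (by linarith [h.one_lt])
  have ofReal_left (u : ℂ) :
      ENNReal.ofReal ((1 - ‖z‖ ^ 2) * ‖u‖ ^ 2) = (1 - ‖z‖ₑ ^ 2) * ‖u‖ₑ ^ 2 := by
    rw [ENNReal.ofReal_mul' (by positivity), ofReal_one_sub_norm_sq, ofReal_norm_sq]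
  have ofReal_right (k : ℕ) : ENNReal.ofReal (‖a k‖ ^ 2 * (n k * ‖z‖ ^ (n k - 1))) =
      ‖a k‖ₑ ^ 2 * (n k * ‖z‖ₑ ^ (n k - 1)) := by
    rw [ENNReal.ofReal_mul (by positivity), ENNReal.ofReal_mul (by positivity),
      ENNReal.ofReal_natCast, ENNReal.ofReal_pow (norm_nonneg z), ofReal_norm_sq, ofReal_norm]
  rw [← ofReal_left]
  refine le_of_tendsto'
    (ENNReal.tendsto_ofReal ((hw.tendsto_sum_nat.norm.pow 2).const_mul (1 - ‖z‖ ^ 2))) fun N => ?_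
  refine (ENNReal.ofReal_le_ofReal (h.one_sub_mul_norm_sum_sq_le a hz N)).trans ?_
  rw [ENNReal.ofReal_mul ratio_nonneg, ENNReal.ofReal_sum_of_nonneg fun k _ => by positivity]
  simp only [ofReal_right]
  gcongr
  exact ENNReal.sum_le_tsum _

lemma one_sub_mul_lintegral_enorm_sq_le (h : IsLacunary lam n) {a : ℕ → ℂ} {F : ℂ → ℂ}
    (hF : ∀ z ∈ ball (0 : ℂ) 1, HasSum (fun k => a k * (n k * z ^ (n k - 1))) (F z))
    {b : ℂ} (hb : ‖b‖ < 1) :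
    (1 - ‖b‖ₑ ^ 2) *
        ∫⁻ z in ball (0 : ℂ) 1, (1 - ‖z‖ₑ ^ 2) * ‖F z‖ₑ ^ 2 * ‖(1 - b * z)⁻¹‖ₑ ^ 2 ≤
      ENNReal.ofReal (2 * lam / (lam - 1)) * ENNReal.ofReal (2 * π) * ∑' k, ‖a k‖ₑ ^ 2 := by
  set K := ENNReal.ofReal (2 * lam / (lam - 1))
  calc (1 - ‖b‖ₑ ^ 2) *
        ∫⁻ z in ball (0 : ℂ) 1, (1 - ‖z‖ₑ ^ 2) * ‖F z‖ₑ ^ 2 * ‖(1 - b * z)⁻¹‖ₑ ^ 2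
      ≤ (1 - ‖b‖ₑ ^ 2) * ∫⁻ z in ball (0 : ℂ) 1, K * ∑' k,
          ‖a k‖ₑ ^ 2 * (n k * (‖z‖ₑ ^ (n k - 1) * ‖(1 - b * z)⁻¹‖ₑ ^ 2)) := by
        refine mul_le_mul' le_rfl (setLIntegral_mono' measurableSet_ball fun z hz => ?_)
        simp only [← mul_assoc, ENNReal.tsum_mul_right]
        refine mul_le_mul' ?_ le_rfl
        simpa only [mul_assoc] using
          h.one_sub_mul_enorm_sq_le_tsum (mem_ball_zero_iff.1 hz).le (hF z hz)
    _ = K * ∑' k, ‖a k‖ₑ ^ 2 * ((1 - ‖b‖ₑ ^ 2) *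
          (n k * ∫⁻ z in ball (0 : ℂ) 1, ‖z‖ₑ ^ (n k - 1) * ‖(1 - b * z)⁻¹‖ₑ ^ 2)) := by
        rw [lintegral_const_mul' _ _ ENNReal.ofReal_ne_top, lintegral_tsum fun k => by fun_prop,
          mul_left_comm, ← ENNReal.tsum_mul_left]
        congr 1
        refine tsum_congr fun k => ?_
        rw [lintegral_const_mul _ (by fun_prop), lintegral_const_mul _ (by fun_prop), mul_left_comm]
    _ ≤ K * ∑' k, ‖a k‖ₑ ^ 2 * ENNReal.ofReal (2 * π) := by
        gcongr with k
        exact one_sub_mul_lintegral_pow_mul_inv_one_sub_le hb (n k)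
    _ = K * ENNReal.ofReal (2 * π) * ∑' k, ‖a k‖ₑ ^ 2 := by
        rw [ENNReal.tsum_mul_right]
        ring

lemma memBMOA (h : IsLacunary lam n) {a : ℕ → ℂ} {f : ℂ → ℂ}
    (hf : ∀ z ∈ ball (0 : ℂ) 1, HasSum (fun k => a k * z ^ n k) (f z))
    (ha : Summable fun k => ‖a k‖ ^ 2) : MemBMOA f := by
  have deriv_facts {z : ℂ} (hz : z ∈ ball (0 : ℂ) 1) :=
    differentiableAt_and_hasSum_deriv_of_hasSum_mul_pow hf hz
  have tsum_ne_top : ∑' k, ‖a k‖ₑ ^ 2 ≠ ∞ := by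
    simp only [← ofReal_norm_sq]
    exact ha.tsum_ofReal_ne_top
  refine memBMOA_iff.2 ⟨fun z hz => (deriv_facts hz).1.differentiableWithinAt,
    ENNReal.ofReal (2 * lam / (lam - 1)) * ENNReal.ofReal (2 * π) * ∑' k, ‖a k‖ₑ ^ 2,
    ENNReal.mul_ne_top (ENNReal.mul_ne_top ENNReal.ofReal_ne_top ENNReal.ofReal_ne_top)
      tsum_ne_top, fun b hb => ?_⟩
  have norm_conj_lt : ‖conj b‖ < 1 := by simpa using hb
  simpa using h.one_sub_mul_lintegral_enorm_sq_le (fun z hz => (deriv_facts hz).2) norm_conj_lt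

end IsLacunary

/-- A lacunary series `f(z) = ∑ aₖ z^{nₖ}` (with `n_{k+1} ≥ λ nₖ`, `λ > 1`)
analytic on `𝔻` belongs to `BMOA` iff `∑ |aₖ|² < ∞`. -/
theorem statement6 (a : ℕ → ℂ) (n : ℕ → ℕ) (lam : ℝ) (hlam : 1 < lam)
    (hpos : ∀ k, 0 < n k)
    (hlac : ∀ k, lam * (n k : ℝ) ≤ (n (k + 1) : ℝ))
    (f : ℂ → ℂ)
    (hf : ∀ z ∈ Metric.ball (0 : ℂ) 1, HasSum (fun k => a k * z ^ n k) (f z)) :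
    MemBMOA f ↔ Summable (fun k => ‖a k‖ ^ 2) := by
  have lacunary : IsLacunary lam n := ⟨hlam, hlac⟩
  have injective : n.Injective := (lacunary.strictMono (hpos 0)).injective
  refine ⟨fun hBMOA => ?_, lacunary.memBMOA hf⟩
  have summable_extend : Summable fun m => ‖Function.extend n a 0 m‖ ^ 2 :=
    hBMOA.summable_norm_sq fun z hz => hasSum_extend_mul_pow injective (hf z hz)
  simpa [Function.comp_def, injective.extend_apply] using summable_extend.comp_injective injective
end

section
/- There exists a complex measure μ on 𝔻 such that sup_{w∈𝔻} |∫_𝔻 (1-|w|²)/(1 - w̄ z)² dμ(z)| < ∞, but μ is not a Hankel measure, i.e., there is no constant C with |∫_𝔻 f² dμ| ≤ C ‖f‖²_{H²} for all f ∈ H². -/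
open MeasureTheory Complex Metric Real

/-- The complex measure `dμ = h dν` (with `ν` a finite positive measure on `𝔻`) is a
Hankel measure: there is `C` with `|∫_𝔻 f² dμ| ≤ C ‖f‖²_{H²}` for all `f ∈ H²`,
phrased by testing against every bound `M` on the square of the `H²` norm of `f`. -/
def IsHankelMeasure (ν : Measure ℂ) (h : ℂ → ℂ) : Prop :=
  ∃ C : ℝ, ∀ f : ℂ → ℂ, DifferentiableOn ℂ f (Metric.ball 0 1) →
    ∀ M : ℝ,
      (∀ r ∈ Set.Ioo (0 : ℝ) 1,
        (2 * π)⁻¹ * (∫ θ in (0 : ℝ)..(2 * π),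
          ‖f ((r : ℂ) * Complex.exp (θ * Complex.I))‖ ^ 2) ≤ M) →
      ‖∫ z, f z ^ 2 * h z ∂ν‖ ≤ C * M

/-!
Write `φ` for the mean of the first `N = s ^ 2` monomials and let `aₖ = N * 2 ^ (k + 1)`, `k < N`.
The polynomial `q = ∑ aₖ φ² z ^ aₖ` satisfies `(1 - |z|) |q(z)| ≤ 2`, by the same estimate that
puts a lacunary series with bounded coefficients into the Bloch space, and `∫ |q| ≤ 2π` over the
disc. Integrating `conj q` against the kernel `(1 - |w|²) / (1 - w̄ z)²` gives
`π (1 - |w|²) conj q(w)`, so all these integrals are bounded by a constant independent of `N`.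

On the other hand `f = φ (s + ∑ z ^ aₖ)` has `‖f‖²_{H²} ≤ 4`: indeed `‖φ‖² ≤ 1 / N`, and the
`N` blocks `φ z ^ aₖ` have disjoint spectra. The cross term `2 s ∑ φ² z ^ aₖ` of `f²` resonates with
`q`; since all coefficients are nonnegative nothing cancels, and `∫ f² conj q ≥ s π / 2`.
Superposing the densities `2 ^ (-j) conj q` for `s = 4 ^ j` keeps the kernel integrals bounded while
the pairing with `f²` is at least `2 ^ j π / 2`, which defeats every Hankel constant.
-/

section

open Polynomial ComplexConjugate

/-! ### Termwise integration -/

section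

variable {α ι : Type*} [MeasurableSpace α] {μ : Measure α} [Countable ι]

lemma integrable_tsum_of_summable_integral_norm {E : Type*} [NormedAddCommGroup E]
    [CompleteSpace E] {F : ι → α → E} (hF : ∀ i, Integrable (F i) μ)
    (hsum : Summable fun i ↦ ∫ x, ‖F i x‖ ∂μ) : Integrable (fun x ↦ ∑' i, F i x) μ := by
  have hL1 : ∑' i, ‖(hF i).toL1 (F i)‖ₑ ≠ ⊤ := by
    simpa only [← ofReal_norm, L1.norm_of_fun_eq_integral_norm] using hsum.tsum_ofReal_ne_top
  have hcoe : ∀ᵐ x ∂μ, ∀ i, (hF i).toL1 (F i) x = F i x :=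
    ae_all_iff.2 fun i ↦ Integrable.coeFn_toL1 (hF i)
  refine (L1.integrable_coeFn (∑' i, (hF i).toL1 (F i))).congr ?_
  filter_upwards [Lp.hasSum_coeFn_tsum hL1, hcoe] with x hx hxF
  simpa only [hxF] using hx.tsum_eq.symm

lemma hasSum_integral_mul_tsum {𝕜 : Type*} [RCLike 𝕜] {g : α → 𝕜} {F : ι → α → 𝕜} {K : ℝ}
    (hg : AEStronglyMeasurable g μ) (hK : ∀ᵐ x ∂μ, ‖g x‖ ≤ K) (hF : ∀ i, Integrable (F i) μ)
    (hsum : Summable fun i ↦ ∫ x, ‖F i x‖ ∂μ) :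
    HasSum (fun i ↦ ∫ x, g x * F i x ∂μ) (∫ x, g x * ∑' i, F i x ∂μ) := by
  have hgF : ∀ i, Integrable (fun x ↦ g x * F i x) μ := fun i ↦ (hF i).bdd_mul hg hK
  have hle : ∀ i, ∫ x, ‖g x * F i x‖ ∂μ ≤ K * ∫ x, ‖F i x‖ ∂μ := fun i ↦ by
    rw [← integral_const_mul]
    refine integral_mono_ae (hgF i).norm ((hF i).norm.const_mul K) ?_
    filter_upwards [hK] with x hx
    rw [norm_mul]
    gcongr
  simpa only [tsum_mul_left] using hasSum_integral_of_summable_integral_norm hgF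
    (.of_nonneg_of_le (fun i ↦ integral_nonneg fun x ↦ norm_nonneg _) hle (hsum.mul_left K))

end

lemma norm_conj_mul_lt_one {w z : ℂ} (hw : ‖w‖ < 1) (hz : ‖z‖ ≤ 1) : ‖conj w * z‖ < 1 := by
  rw [norm_mul, RCLike.norm_conj]
  exact mul_lt_one_of_nonneg_of_lt_one_left (norm_nonneg w) hw hz

lemma hasSum_integral_bergmanKernel_mul {μ : Measure ℂ} (hμ : ∀ᵐ z ∂μ, z ∈ ball (0 : ℂ) 1)
    {h : ℂ → ℂ} (hh : Integrable h μ) {w : ℂ} (hw : ‖w‖ < 1) :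
    HasSum (fun n : ℕ ↦ (n + 1) * conj w ^ n * ∫ z, z ^ n * h z ∂μ)
      (∫ z, 1 / (1 - conj w * z) ^ 2 * h z ∂μ) := by
  set F : ℕ → ℂ → ℂ := fun n z ↦ (n + 1) * conj w ^ n * (z ^ n * h z) with hFdef
  have hpow : ∀ n : ℕ, ∀ᵐ z ∂μ, ‖z ^ n‖ ≤ 1 := fun n ↦ by
    filter_upwards [hμ] with z hz
    exact norm_pow z n ▸ pow_le_one₀ (norm_nonneg z) (mem_ball_zero_iff.1 hz).le
  have hmom : ∀ n : ℕ, Integrable (fun z ↦ z ^ n * h z) μ := fun n ↦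
    hh.bdd_mul (continuous_pow n).aestronglyMeasurable (hpow n)
  have hF : ∀ n, Integrable (F n) μ := fun n ↦ (hmom n).const_mul _
  have hle : ∀ n, ∫ z, ‖F n z‖ ∂μ ≤ ((n + 1).choose 1 * ‖w‖ ^ n) * ∫ z, ‖h z‖ ∂μ := fun n ↦ by
    rw [← integral_const_mul]
    refine integral_mono_ae (hF n).norm (hh.norm.const_mul _) ?_
    filter_upwards [hpow n] with z hz
    have hn : ‖(n + 1 : ℂ)‖ = n + 1 := by exact_mod_cast Complex.norm_natCast (n + 1)
    simp only [hFdef, norm_mul, norm_pow, RCLike.norm_conj, hn, Nat.choose_one_right,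
      Nat.cast_succ] at hz ⊢
    gcongr
    exact mul_le_of_le_one_left (norm_nonneg _) hz
  have hgeom : Summable fun n : ℕ ↦ ((n + 1).choose 1 : ℝ) * ‖w‖ ^ n :=
    (hasSum_choose_mul_geometric_of_norm_lt_one 1 (by simpa using hw)).summable
  have hsum := hasSum_integral_of_summable_integral_norm hF
    (.of_nonneg_of_le (fun n ↦ integral_nonneg fun z ↦ norm_nonneg _) hle (hgeom.mul_right _))
  have hkernel : ∀ᵐ z ∂μ, ∑' n, F n z = 1 / (1 - conj w * z) ^ 2 * h z := by
    filter_upwards [hμ] with z hz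
    have hwz : ‖conj w * z‖ < 1 := norm_conj_mul_lt_one hw (mem_ball_zero_iff.1 hz).le
    rw [← ((hasSum_choose_mul_geometric_of_norm_lt_one 1 hwz).mul_right (h z)).tsum_eq]
    refine tsum_congr fun n ↦ ?_
    simp only [hFdef, Nat.choose_one_right, Nat.cast_succ]
    ring
  rw [integral_congr_ae hkernel] at hsum
  simpa only [hFdef, integral_const_mul] using hsum

/-! ### Weighted pairings of polynomials -/

/-- The symmetric bilinear form `∑ n, pₙ qₙ wₙ` on real polynomials. Polynomials with real
coefficients pair this way in every `L²` space in which the monomials are orthogonal with squared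
norms `wₙ`: `w = 1` gives the Hardy space `H²`, and `bergmanWeight` the Bergman space. -/
noncomputable def weightedPairing (w : ℕ → ℝ) : LinearMap.BilinForm ℝ ℝ[X] :=
  LinearMap.mk₂ ℝ (fun p q ↦ p.sum fun n c ↦ c * q.coeff n * w n)
    (fun p p' q ↦ sum_add_index p p' _ (by simp) fun n c c' ↦ by ring)
    (fun c p q ↦ by
      rw [sum_smul_index' p c _ (by simp), Polynomial.sum, Polynomial.sum, Finset.smul_sum]
      exact Finset.sum_congr rfl fun n _ ↦ by simp only [smul_eq_mul]; ring)
    (fun p q q' ↦ by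
      rw [← sum_add']
      exact Finset.sum_congr rfl fun n _ ↦ by simp only [coeff_add, Pi.add_apply]; ring)
    (fun c p q ↦ by
      rw [Polynomial.sum, Polynomial.sum, Finset.smul_sum]
      exact Finset.sum_congr rfl fun n _ ↦ by simp only [coeff_smul, smul_eq_mul]; ring)

lemma weightedPairing_eq_sum (w : ℕ → ℝ) (p q : ℝ[X]) :
    weightedPairing w p q = p.sum fun n c ↦ c * q.coeff n * w n :=
  rfl

lemma weightedPairing_eq_sum_range (w : ℕ → ℝ) {p : ℝ[X]} {D : ℕ} (hp : p.natDegree < D)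
    (q : ℝ[X]) :
    weightedPairing w p q = ∑ n ∈ Finset.range D, p.coeff n * q.coeff n * w n := by
  rw [weightedPairing_eq_sum]
  exact sum_over_range' p (fun n ↦ by rw [zero_mul, zero_mul]) D hp

lemma weightedPairing_X_pow_left (w : ℕ → ℝ) (n : ℕ) (q : ℝ[X]) :
    weightedPairing w (X ^ n) q = q.coeff n * w n := by
  rw [weightedPairing_eq_sum, ← monomial_one_right_eq_X_pow, sum_monomial_index _ _ (by simp),
    one_mul]

lemma weightedPairing_mul_X_pow (w : ℕ → ℝ) (p q : ℝ[X]) (a : ℕ) :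
    weightedPairing w (p * X ^ a) (q * X ^ a) = weightedPairing (fun n ↦ w (n + a)) p q := by
  have hdeg : (p * X ^ a).natDegree < a + (p.natDegree + 1) := by
    have := natDegree_mul_le (p := p) (q := X ^ a)
    rw [natDegree_X_pow] at this
    omega
  rw [weightedPairing_eq_sum_range w hdeg,
    weightedPairing_eq_sum_range _ (Nat.lt_succ_self p.natDegree), Finset.sum_range_add,
    Finset.sum_eq_zero fun n hn ↦ by
      rw [coeff_mul_X_pow', if_neg (Finset.mem_range.1 hn).not_ge, zero_mul, zero_mul], zero_add]
  exact Finset.sum_congr rfl fun n _ ↦ by rw [add_comm a n, coeff_mul_X_pow, coeff_mul_X_pow]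

lemma weightedPairing_self_mono {w w' : ℕ → ℝ} {p : ℝ[X]} (h : ∀ n ≤ p.natDegree, w n ≤ w' n) :
    weightedPairing w p p ≤ weightedPairing w' p p :=
  Finset.sum_le_sum fun n hn ↦
    mul_le_mul_of_nonneg_left (h n (le_natDegree_of_mem_supp n hn)) (mul_self_nonneg _)

lemma weightedPairing_self_nonneg {w : ℕ → ℝ} (hw : ∀ n, 0 ≤ w n) (p : ℝ[X]) :
    0 ≤ weightedPairing w p p :=
  Finset.sum_nonneg fun n _ ↦ mul_nonneg (mul_self_nonneg _) (hw n)

lemma weightedPairing_const_mul (c : ℝ) (w : ℕ → ℝ) (p q : ℝ[X]) :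
    weightedPairing (fun n ↦ c * w n) p q = c * weightedPairing w p q := by
  simp only [weightedPairing_eq_sum, Polynomial.sum, Finset.mul_sum]
  exact Finset.sum_congr rfl fun n _ ↦ by ring

lemma eval_one_sq_le_mul_weightedPairing_one (p : ℝ[X]) :
    p.eval 1 ^ 2 ≤ (p.natDegree + 1) * weightedPairing 1 p p := by
  have hCauchy := sq_sum_le_card_mul_sum_sq (s := Finset.range (p.natDegree + 1)) (f := p.coeff)
  rw [weightedPairing_eq_sum_range 1 (Nat.lt_succ_self p.natDegree), eval_eq_sum_range]
  simpa [sq] using hCauchy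

/-- The subsemiring of polynomials all of whose coefficients are nonnegative. -/
def nonnegCoeffs : Subsemiring ℝ[X] where
  carrier := {p | ∀ n, 0 ≤ p.coeff n}
  mul_mem' hp hq n := by
    rw [coeff_mul]
    exact Finset.sum_nonneg fun _ _ ↦ mul_nonneg (hp _) (hq _)
  one_mem' n := by
    rw [coeff_one]
    positivity
  add_mem' hp hq n := by
    rw [coeff_add]
    exact add_nonneg (hp n) (hq n)
  zero_mem' n := (coeff_zero n).ge

lemma X_mem_nonnegCoeffs : (X : ℝ[X]) ∈ nonnegCoeffs := fun n ↦ by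
  rw [coeff_X]
  positivity

lemma smul_mem_nonnegCoeffs {c : ℝ} (hc : 0 ≤ c) {p : ℝ[X]} (hp : p ∈ nonnegCoeffs) :
    c • p ∈ nonnegCoeffs := fun n ↦ by
  rw [coeff_smul]
  exact mul_nonneg hc (hp n)

lemma weightedPairing_nonneg {w : ℕ → ℝ} (hw : ∀ n, 0 ≤ w n) {p q : ℝ[X]}
    (hp : p ∈ nonnegCoeffs) (hq : q ∈ nonnegCoeffs) : 0 ≤ weightedPairing w p q :=
  Finset.sum_nonneg fun n _ ↦ mul_nonneg (mul_nonneg (hp n) (hq n)) (hw n)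

lemma weightedPairing_one_self_le_mul_eval_one {p : ℝ[X]} (hp : p ∈ nonnegCoeffs) {c : ℝ}
    (hc : ∀ n, p.coeff n ≤ c) : weightedPairing 1 p p ≤ c * p.eval 1 := by
  rw [weightedPairing_eq_sum, eval_eq_sum, Polynomial.sum, Polynomial.sum, Finset.mul_sum]
  refine Finset.sum_le_sum fun n _ ↦ ?_
  simpa using mul_le_mul_of_nonneg_right (hc n) (hp n)

lemma weightedPairing_add_self_le {w : ℕ → ℝ} (hw : ∀ n, 0 ≤ w n) (p q : ℝ[X]) :
    weightedPairing w (p + q) (p + q) ≤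
      2 * weightedPairing w p p + 2 * weightedPairing w q q := by
  have hnonneg := weightedPairing_self_nonneg hw (p - q)
  simp only [map_sub, map_add, LinearMap.sub_apply, LinearMap.add_apply] at hnonneg ⊢
  linarith


/-! ### Orthogonal powers on circles and on the disc -/

/-- The powers of `u` are pairwise orthogonal in `L²(μ)`, and `u ^ n` has squared norm `w n`. -/
structure OrthogonalPowers {α : Type*} [MeasurableSpace α] (μ : Measure α) (u : α → ℂ)
    (w : ℕ → ℝ) : Prop where
  integrable : ∀ i j, Integrable (fun x ↦ u x ^ i * conj (u x) ^ j) μ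
  integral_eq : ∀ i j, ∫ x, u x ^ i * conj (u x) ^ j ∂μ = if i = j then (w i : ℂ) else 0

namespace OrthogonalPowers

variable {α : Type*} [MeasurableSpace α] {μ : Measure α} {u : α → ℂ} {w : ℕ → ℝ}

lemma integral_aeval_mul_conj_aeval (h : OrthogonalPowers μ u w) (p q : ℝ[X]) :
    ∫ x, aeval (u x) p * conj (aeval (u x) q) ∂μ = (weightedPairing w p q : ℝ) := by
  set D := max p.natDegree q.natDegree + 1
  have hp : p.natDegree < D := by omega
  have hq : q.natDegree < D := by omega
  have hint : ∀ i j, Integrable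
      (fun x ↦ ((p.coeff i * q.coeff j : ℝ) : ℂ) * (u x ^ i * conj (u x) ^ j)) μ :=
    fun i j ↦ (h.integrable i j).const_mul _
  calc ∫ x, aeval (u x) p * conj (aeval (u x) q) ∂μ
      = ∫ x, ∑ i ∈ Finset.range D, ∑ j ∈ Finset.range D,
          ((p.coeff i * q.coeff j : ℝ) : ℂ) * (u x ^ i * conj (u x) ^ j) ∂μ := by
        congr 1 with x
        rw [aeval_eq_sum_range' hp, aeval_eq_sum_range' hq, map_sum, Finset.sum_mul_sum]
        refine Finset.sum_congr rfl fun i _ ↦ Finset.sum_congr rfl fun j _ ↦ ?_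
        simp only [Complex.real_smul, map_mul, conj_ofReal, map_pow, ofReal_mul]
        ring
    _ = ∑ i ∈ Finset.range D, ∑ j ∈ Finset.range D,
          ((p.coeff i * q.coeff j : ℝ) : ℂ) * if i = j then (w i : ℂ) else 0 := by
        rw [integral_finsetSum _ fun i _ ↦ integrable_finsetSum _ fun j _ ↦ hint i j]
        refine Finset.sum_congr rfl fun i _ ↦ ?_
        rw [integral_finsetSum _ fun j _ ↦ hint i j]
        exact Finset.sum_congr rfl fun j _ ↦ by rw [integral_const_mul, h.integral_eq]
    _ = (weightedPairing w p q : ℝ) := by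
        rw [weightedPairing_eq_sum_range w hp, ofReal_sum]
        refine Finset.sum_congr rfl fun i hi ↦ ?_
        simp only [mul_ite, mul_zero, Finset.sum_ite_eq, hi, if_true, ofReal_mul]

lemma integral_norm_aeval_sq (h : OrthogonalPowers μ u w) (p : ℝ[X]) :
    ∫ x, ‖aeval (u x) p‖ ^ 2 ∂μ = weightedPairing w p p := by
  have hself := h.integral_aeval_mul_conj_aeval p p
  simp_rw [Complex.mul_conj', ← ofReal_pow] at hself
  rwa [integral_complex_ofReal, ofReal_inj] at hself

end OrthogonalPowers

lemma integral_exp_sub_mul_I (i j : ℕ) (c : ℝ) :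
    ∫ θ in c..(c + 2 * π), Complex.exp ((i - j : ℂ) * I * θ) =
      if i = j then (2 * π : ℂ) else 0 := by
  split_ifs with h
  · simp [h]
  · have hne : (i - j : ℂ) * I ≠ 0 :=
      mul_ne_zero (sub_ne_zero.2 (by exact_mod_cast h)) I_ne_zero
    have hper : Complex.exp ((i - j : ℂ) * I * ((c + 2 * π : ℝ) : ℂ)) =
        Complex.exp ((i - j : ℂ) * I * c) :=
      Complex.exp_eq_exp_iff_exists_int.2 ⟨(i : ℤ) - j, by push_cast; ring⟩
    rw [integral_exp_mul_complex hne, hper, sub_self, zero_div]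

lemma polar_pow_mul_conj_pow (i j : ℕ) (r θ : ℝ) :
    (r * Complex.exp (θ * I)) ^ i * conj (r * Complex.exp (θ * I)) ^ j =
      r ^ (i + j) * Complex.exp ((i - j : ℂ) * I * θ) := by
  rw [map_mul, ← Complex.exp_conj, map_mul, conj_ofReal, conj_ofReal, conj_I, mul_pow, mul_pow,
    ← Complex.exp_nat_mul, ← Complex.exp_nat_mul,
    show (i - j : ℂ) * I * θ = i * (θ * I) + j * (θ * -I) by ring, Complex.exp_add]
  ring

lemma orthogonalPowers_circle (r : ℝ) :
    OrthogonalPowers (volume.restrict (Set.Ioc 0 (2 * π))) (fun θ : ℝ ↦ r * Complex.exp (θ * I))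
      fun n ↦ 2 * π * r ^ (2 * n) where
  integrable i j := by
    have hcont : Continuous fun θ : ℝ ↦
        (r * Complex.exp (θ * I)) ^ i * conj (r * Complex.exp (θ * I)) ^ j := by fun_prop
    exact hcont.integrableOn_Ioc
  integral_eq i j := by
    have hexp := integral_exp_sub_mul_I i j 0
    rw [zero_add] at hexp
    simp_rw [polar_pow_mul_conj_pow]
    rw [← intervalIntegral.integral_of_le two_pi_pos.le, intervalIntegral.integral_const_mul, hexp,
      mul_ite, mul_zero]
    refine if_ctx_congr Iff.rfl (fun hij ↦ ?_) fun _ ↦ rfl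
    subst hij
    push_cast
    ring

lemma circleMean_norm_aeval_sq_le (p : ℝ[X]) {r : ℝ} (hr : r ∈ Set.Ioo (0 : ℝ) 1) :
    (2 * π)⁻¹ * ∫ θ in (0 : ℝ)..2 * π, ‖aeval (r * Complex.exp (θ * I)) p‖ ^ 2 ≤
      weightedPairing 1 p p := by
  rw [intervalIntegral.integral_of_le two_pi_pos.le,
    (orthogonalPowers_circle r).integral_norm_aeval_sq, weightedPairing_const_mul,
    inv_mul_cancel_left₀ two_pi_pos.ne']
  exact weightedPairing_self_mono fun n _ ↦ pow_le_one₀ hr.1.le hr.2.le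

lemma integrableOn_ball_of_continuous {E : Type*} [NormedAddCommGroup E] {f : ℂ → E}
    (hf : Continuous f) (c : ℂ) (r : ℝ) : IntegrableOn f (ball c r) :=
  (hf.continuousOn.integrableOn_compact (isCompact_closedBall c r)).mono_set
    ball_subset_closedBall

lemma integral_ball_eq_mul_of_polar {f : ℂ → ℂ} {g e : ℝ → ℂ}
    (hf : ∀ r θ : ℝ, f (r * Complex.exp (θ * I)) = g r * e θ) {R : ℝ} (hR : 0 ≤ R) :
    ∫ z in ball 0 R, f z = (∫ r in (0 : ℝ)..R, r * g r) * ∫ θ in (-π)..π, e θ := by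
  rw [← integral_indicator measurableSet_ball, ← Complex.integral_comp_polarCoord_symm]
  have hpolar : ∀ x ∈ polarCoord.target,
      x.1 • (ball 0 R).indicator f (Complex.polarCoord.symm x) =
        (Set.Iio R).indicator (fun r : ℝ ↦ r * g r) x.1 * e x.2 := by
    classical
    rintro ⟨r, θ⟩ hx
    have hr : 0 < r := (Set.mem_prod.1 hx).1
    have hexp : Complex.polarCoord.symm (r, θ) = r * Complex.exp (θ * I) := by
      rw [Complex.polarCoord_symm_apply, Complex.exp_mul_I, ofReal_cos, ofReal_sin]
    have hnorm : ‖(r * Complex.exp (θ * I) : ℂ)‖ = r := by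
      rw [norm_mul, norm_exp_ofReal_mul_I, mul_one, norm_real, norm_of_nonneg hr.le]
    simp only [hexp, Set.indicator_apply, mem_ball_zero_iff, hnorm, hf, Set.mem_Iio]
    split_ifs
    · rw [real_smul, mul_assoc]
    · rw [smul_zero, zero_mul]
  rw [setIntegral_congr_fun polarCoord.open_target.measurableSet hpolar, polarCoord_target,
    Measure.volume_eq_prod, setIntegral_prod_mul, setIntegral_indicator measurableSet_Iio,
    Set.Ioi_inter_Iio, ← integral_Ioc_eq_integral_Ioo, ← integral_Ioc_eq_integral_Ioo,
    intervalIntegral.integral_of_le hR,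
    intervalIntegral.integral_of_le (neg_le_self pi_nonneg)]

/-- The squared norm `π / (n + 1)` of `z ^ n` in the Bergman space, that is, in `L²` of the disc
with respect to area. -/
noncomputable def bergmanWeight (n : ℕ) : ℝ := π / (n + 1)

lemma orthogonalPowers_unitBall :
    OrthogonalPowers (volume.restrict (ball (0 : ℂ) 1)) (fun z ↦ z) bergmanWeight where
  integrable i j := integrableOn_ball_of_continuous (by fun_prop) 0 1
  integral_eq i j := by
    have hexp := integral_exp_sub_mul_I i j (-π)
    rw [show -π + 2 * π = π by ring] at hexp
    have hradial : ∫ r in (0 : ℝ)..1, (r * r ^ (i + j) : ℂ) = 1 / (i + j + 2) := by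
      simp_rw [← pow_succ', ← ofReal_pow, intervalIntegral.integral_ofReal, integral_pow]
      push_cast
      rw [one_pow, zero_pow (Nat.succ_ne_zero _), sub_zero]
      ring
    rw [integral_ball_eq_mul_of_polar (polar_pow_mul_conj_pow i j) zero_le_one, hexp, hradial,
      mul_ite, mul_zero]
    refine if_ctx_congr Iff.rfl (fun hij ↦ ?_) fun _ ↦ rfl
    subst hij
    have hi : (i + 1 : ℂ) ≠ 0 := Nat.cast_add_one_ne_zero i
    have hi' : (i + i + 2 : ℂ) = 2 * (i + 1) := by ring
    rw [bergmanWeight, hi']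
    push_cast
    field_simp

lemma bergmanWeight_nonneg (n : ℕ) : 0 ≤ bergmanWeight n :=
  div_nonneg pi_nonneg n.cast_add_one_pos.le

lemma weightedPairing_bergmanWeight_mul_X_pow_le (p : ℝ[X]) {a : ℕ} (ha : 0 < a) :
    weightedPairing bergmanWeight (p * X ^ a) (p * X ^ a) ≤ π / a * weightedPairing 1 p p := by
  rw [weightedPairing_mul_X_pow, ← weightedPairing_const_mul]
  refine weightedPairing_self_mono fun n _ ↦ ?_
  rw [bergmanWeight, Pi.one_apply, mul_one]
  gcongr
  push_cast
  linarith [n.cast_nonneg (α := ℝ)]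

lemma le_weightedPairing_bergmanWeight_mul_X_pow (p : ℝ[X]) (a : ℕ) :
    π / (a + p.natDegree + 1) * weightedPairing 1 p p ≤
      weightedPairing bergmanWeight (p * X ^ a) (p * X ^ a) := by
  rw [weightedPairing_mul_X_pow, ← weightedPairing_const_mul]
  refine weightedPairing_self_mono fun n hn ↦ ?_
  rw [bergmanWeight, Pi.one_apply, mul_one]
  gcongr
  exact_mod_cast (by omega : n + a ≤ a + p.natDegree)

lemma integral_bergmanKernel_mul_conj_aeval (q : ℝ[X]) {w : ℂ} (hw : ‖w‖ < 1) :
    ∫ z in ball (0 : ℂ) 1, 1 / (1 - conj w * z) ^ 2 * conj (aeval z q) = π * conj (aeval w q) := by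
  have hint : IntegrableOn (fun z : ℂ ↦ conj (aeval z q)) (ball 0 1) :=
    integrableOn_ball_of_continuous
      (Complex.continuous_conj.comp (Polynomial.continuous_aeval q)) 0 1
  have hmoment : ∀ n : ℕ, (n + 1) * conj w ^ n * ∫ z in ball (0 : ℂ) 1, z ^ n * conj (aeval z q) =
      π * (q.coeff n * conj w ^ n) := fun n ↦ by
    have hpair := orthogonalPowers_unitBall.integral_aeval_mul_conj_aeval (X ^ n) q
    simp only [map_pow, aeval_X, weightedPairing_X_pow_left, bergmanWeight] at hpair
    have hn : (n + 1 : ℂ) ≠ 0 := Nat.cast_add_one_ne_zero n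
    rw [hpair]
    push_cast
    field_simp
  have hkernel := hasSum_integral_bergmanKernel_mul (ae_restrict_mem measurableSet_ball) hint hw
  simp only [hmoment] at hkernel
  refine hkernel.unique ?_
  rw [aeval_eq_sum_range, map_sum, Finset.mul_sum]
  simp only [real_smul, map_mul, conj_ofReal, map_pow]
  refine hasSum_sum_of_ne_finset_zero fun n hn ↦ ?_
  rw [coeff_eq_zero_of_natDegree_lt (by simpa using hn), ofReal_zero, zero_mul, mul_zero]

lemma norm_integral_bergmanKernel_mul_conj_aeval_le {q : ℝ[X]} {B : ℝ} {w : ℂ} (hw : ‖w‖ < 1)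
    (hq : (1 - ‖w‖) * ‖aeval w q‖ ≤ B) :
    ‖∫ z in ball (0 : ℂ) 1,
      (((1 - ‖w‖ ^ 2 : ℝ) : ℂ) / (1 - conj w * z) ^ 2) * conj (aeval z q)‖ ≤ 2 * π * B := by
  have hrepr : ∫ z in ball (0 : ℂ) 1,
      (((1 - ‖w‖ ^ 2 : ℝ) : ℂ) / (1 - conj w * z) ^ 2) * conj (aeval z q) =
        ((1 - ‖w‖ ^ 2 : ℝ) : ℂ) * (π * conj (aeval w q)) := by
    rw [← integral_bergmanKernel_mul_conj_aeval q hw, ← integral_const_mul]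
    congr 1 with z
    ring
  have : 0 ≤ 1 - ‖w‖ := sub_nonneg.2 hw.le
  have hfactor : 1 - ‖w‖ ^ 2 = (1 + ‖w‖) * (1 - ‖w‖) := by ring
  calc _ = π * ((1 + ‖w‖) * ((1 - ‖w‖) * ‖aeval w q‖)) := by
        rw [hrepr, hfactor, norm_mul, norm_mul, RCLike.norm_conj, norm_real, norm_real,
          norm_of_nonneg pi_nonneg, norm_of_nonneg (by positivity)]
        ring
    _ ≤ π * (2 * B) := by gcongr; linarith
    _ = 2 * π * B := by ring

lemma norm_bergmanKernel_le {w z : ℂ} (hw : ‖w‖ < 1) (hz : ‖z‖ ≤ 1) :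
    ‖((1 - ‖w‖ ^ 2 : ℝ) : ℂ) / (1 - conj w * z) ^ 2‖ ≤ |1 - ‖w‖ ^ 2| / (1 - ‖w‖) ^ 2 := by
  have hdenom : 1 - ‖w‖ ≤ ‖1 - conj w * z‖ := by
    have htriangle := norm_sub_norm_le (1 : ℂ) (conj w * z)
    rw [norm_one, norm_mul, RCLike.norm_conj] at htriangle
    linarith [mul_le_of_le_one_right (norm_nonneg w) hz]
  have : 0 < 1 - ‖w‖ := sub_pos.2 hw
  rw [norm_div, norm_pow, norm_real, Real.norm_eq_abs]
  gcongr

/-! ### Lacunary polynomials -/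

/-- The arithmetic mean `(1 + X + ⋯ + X ^ (N - 1)) / N` of the first `N` monomials. It is bounded
by `1` on the disc, but its `H²` norm is only `N ^ (-1/2)`. -/
noncomputable def monomialMean (N : ℕ) : ℝ[X] := (N : ℝ)⁻¹ • ∑ i ∈ Finset.range N, X ^ i

lemma coeff_monomialMean (N n : ℕ) :
    (monomialMean N).coeff n = if n < N then (N : ℝ)⁻¹ else 0 := by
  simp [monomialMean, finsetSum_coeff, coeff_X_pow]

lemma coeff_monomialMean_le (N n : ℕ) : (monomialMean N).coeff n ≤ (N : ℝ)⁻¹ := by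
  rw [coeff_monomialMean]
  split_ifs
  exacts [le_rfl, by positivity]

lemma monomialMean_mem_nonnegCoeffs (N : ℕ) : monomialMean N ∈ nonnegCoeffs :=
  smul_mem_nonnegCoeffs (by positivity) (sum_mem fun i _ ↦ pow_mem X_mem_nonnegCoeffs i)

lemma natDegree_monomialMean_le (N : ℕ) : (monomialMean N).natDegree ≤ N - 1 :=
  natDegree_le_iff_coeff_eq_zero.2 fun n hn ↦ by
    rw [coeff_monomialMean, if_neg (by omega)]

lemma eval_one_monomialMean {N : ℕ} (hN : N ≠ 0) : (monomialMean N).eval 1 = 1 := by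
  simp [monomialMean, eval_finsetSum, hN]

lemma norm_aeval_monomialMean_le_one (N : ℕ) {z : ℂ} (hz : ‖z‖ ≤ 1) :
    ‖aeval z (monomialMean N)‖ ≤ 1 := by
  have hsum : ‖∑ i ∈ Finset.range N, z ^ i‖ ≤ N := by
    simpa using norm_sum_le_of_le (Finset.range N) fun i _ ↦
      (norm_pow z i).le.trans (pow_le_one₀ (norm_nonneg z) hz)
  rw [monomialMean, map_smul, map_sum, norm_smul, norm_inv, Real.norm_natCast]
  simp only [map_pow, aeval_X]
  exact inv_mul_le_one_of_le₀ hsum N.cast_nonneg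

lemma weightedPairing_one_monomialMean_le {N : ℕ} (hN : N ≠ 0) :
    weightedPairing 1 (monomialMean N) (monomialMean N) ≤ (N : ℝ)⁻¹ := by
  simpa [eval_one_monomialMean hN] using weightedPairing_one_self_le_mul_eval_one
    (monomialMean_mem_nonnegCoeffs N) (coeff_monomialMean_le N)

lemma le_weightedPairing_one_monomialMean_sq {N : ℕ} (hN : N ≠ 0) :
    (2 * N : ℝ)⁻¹ ≤ weightedPairing 1 (monomialMean N ^ 2) (monomialMean N ^ 2) := by
  have hdeg : ((monomialMean N ^ 2).natDegree + 1 : ℝ) ≤ 2 * N := by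
    have := natDegree_pow_le_of_le 2 (natDegree_monomialMean_le N)
    exact_mod_cast (by omega : (monomialMean N ^ 2).natDegree + 1 ≤ 2 * N)
  have hCauchy := eval_one_sq_le_mul_weightedPairing_one (monomialMean N ^ 2)
  rw [eval_pow, eval_one_monomialMean hN, one_pow, one_pow] at hCauchy
  rw [inv_le_iff_one_le_mul₀' (by positivity)]
  exact hCauchy.trans (mul_le_mul_of_nonneg_right hdeg
    (weightedPairing_self_nonneg (fun _ ↦ zero_le_one) _))

/-- The lacunary exponents `N * 2 ^ (k + 1)`, so spaced that the blocks
`X ^ lacunaryExponent N k * monomialMean N` have disjoint supports. -/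
def lacunaryExponent (N k : ℕ) : ℕ := N * 2 ^ (k + 1)

lemma lacunaryExponent_eq_add (N k : ℕ) : lacunaryExponent N k = N * 2 ^ k + N * 2 ^ k := by
  rw [lacunaryExponent, pow_succ]
  ring

lemma two_mul_le_lacunaryExponent (N k : ℕ) : 2 * N ≤ lacunaryExponent N k := by
  rw [lacunaryExponent, pow_succ]
  nlinarith [Nat.one_le_two_pow (n := k)]

lemma mul_pow_add_le_sum_pow {r : ℝ} (hr₀ : 0 ≤ r) (hr₁ : r ≤ 1) (a b : ℕ) :
    b * r ^ (a + b) ≤ ∑ n ∈ Finset.range b, r ^ (a + n) := by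
  have hterm : ∑ _n ∈ Finset.range b, r ^ (a + b) ≤ ∑ n ∈ Finset.range b, r ^ (a + n) :=
    Finset.sum_le_sum fun n hn ↦
      pow_le_pow_of_le_one hr₀ hr₁ (by have := Finset.mem_range.1 hn; omega)
  simpa using hterm

lemma sum_lacunaryExponent_mul_pow_le (N K : ℕ) {r : ℝ} (hr₀ : 0 ≤ r) (hr₁ : r ≤ 1) :
    ∑ k ∈ Finset.range K, lacunaryExponent N k * r ^ lacunaryExponent N k ≤
      2 * ∑ n ∈ Finset.range (N * 2 ^ K), r ^ n := by
  induction K with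
  | zero =>
    rw [Finset.sum_range_zero]
    positivity
  | succ K ih =>
    have hblock := mul_pow_add_le_sum_pow hr₀ hr₁ (N * 2 ^ K) (N * 2 ^ K)
    rw [← lacunaryExponent_eq_add] at hblock
    have hcast : (lacunaryExponent N K : ℝ) = 2 * (N * 2 ^ K : ℕ) := by
      rw [lacunaryExponent_eq_add]
      push_cast
      ring
    rw [Finset.sum_range_succ, ← lacunaryExponent, lacunaryExponent_eq_add N K,
      Finset.sum_range_add, ← lacunaryExponent_eq_add, hcast]
    linarith

/-- The lacunary polynomial whose product with `monomialMean N` is a sum of `N` blocks with disjoint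
supports, hence has `H²` norm at most `1`. -/
noncomputable def lacunarySum (N : ℕ) : ℝ[X] :=
  ∑ k ∈ Finset.range N, X ^ lacunaryExponent N k

lemma lacunarySum_mem_nonnegCoeffs (N : ℕ) : lacunarySum N ∈ nonnegCoeffs :=
  sum_mem fun _ _ ↦ pow_mem X_mem_nonnegCoeffs _

lemma coeff_monomialMean_mul_X_pow (N m n : ℕ) :
    (monomialMean N * X ^ (N * m)).coeff n = if n / N = m then (N : ℝ)⁻¹ else 0 := by
  rcases N.eq_zero_or_pos with rfl | hN
  · simp [monomialMean]
  · rw [coeff_mul_X_pow', coeff_monomialMean]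
    have hdiv : n / N = m ↔ N * m ≤ n ∧ n - N * m < N := by
      rw [Nat.div_eq_iff hN, mul_comm m N]
      omega
    simp only [hdiv, ite_and]

lemma coeff_monomialMean_mul_lacunarySum_le (N n : ℕ) :
    (monomialMean N * lacunarySum N).coeff n ≤ (N : ℝ)⁻¹ := by
  have hsubsingleton : ((Finset.range N).filter fun k ↦ n / N = 2 ^ (k + 1)).card ≤ 1 :=
    Finset.card_le_one.2 fun k hk l hl ↦ Nat.succ_injective <| Nat.pow_right_injective le_rfl <|
      (Finset.mem_filter.1 hk).2.symm.trans (Finset.mem_filter.1 hl).2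
  simp only [lacunarySum, lacunaryExponent, Finset.mul_sum, finsetSum_coeff,
    coeff_monomialMean_mul_X_pow, ← Finset.sum_filter, Finset.sum_const, nsmul_eq_mul]
  exact mul_le_of_le_one_left (by positivity) (by exact_mod_cast hsubsingleton)

lemma weightedPairing_one_monomialMean_mul_lacunarySum_le {N : ℕ} (hN : N ≠ 0) :
    weightedPairing 1 (monomialMean N * lacunarySum N) (monomialMean N * lacunarySum N) ≤ 1 := by
  have heval : (monomialMean N * lacunarySum N).eval 1 = N := by
    simp [eval_one_monomialMean hN, lacunarySum, eval_finsetSum]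
  have hbound := weightedPairing_one_self_le_mul_eval_one
    (mul_mem (monomialMean_mem_nonnegCoeffs N) (lacunarySum_mem_nonnegCoeffs N))
    (coeff_monomialMean_mul_lacunarySum_le N)
  rwa [heval, inv_mul_cancel₀ (Nat.cast_ne_zero.2 hN)] at hbound

/-- The test polynomial `monomialMean N * (s + lacunarySum N)` with `N = s ^ 2`: the `H²` norms
of its two summands are balanced, and the cross term of its square is
`2 * s * monomialMean N ^ 2 * lacunarySum N`. -/
noncomputable def testPoly (s : ℕ) : ℝ[X] :=
  monomialMean (s ^ 2) * ((s : ℝ[X]) + lacunarySum (s ^ 2))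

lemma testPoly_mem_nonnegCoeffs (s : ℕ) : testPoly s ∈ nonnegCoeffs :=
  mul_mem (monomialMean_mem_nonnegCoeffs _)
    (add_mem (natCast_mem _ s) (lacunarySum_mem_nonnegCoeffs _))

lemma weightedPairing_one_testPoly_le {s : ℕ} (hs : s ≠ 0) :
    weightedPairing 1 (testPoly s) (testPoly s) ≤ 4 := by
  have hmean :
      (s : ℝ) * (s * weightedPairing 1 (monomialMean (s ^ 2)) (monomialMean (s ^ 2))) ≤ 1 :=
    calc _ ≤ (s : ℝ) * (s * ((s ^ 2 : ℕ) : ℝ)⁻¹) := by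
          gcongr
          exact weightedPairing_one_monomialMean_le (pow_ne_zero 2 hs)
      _ = 1 := by
          push_cast
          field_simp
  have hlacunary := weightedPairing_one_monomialMean_mul_lacunarySum_le (pow_ne_zero 2 hs)
  have hsplit : testPoly s =
      (s : ℝ) • monomialMean (s ^ 2) + monomialMean (s ^ 2) * lacunarySum (s ^ 2) := by
    rw [testPoly, mul_add, smul_eq_C_mul, map_natCast, mul_comm (s : ℝ[X])]
  have hadd := weightedPairing_add_self_le (w := 1) (fun _ ↦ zero_le_one)
    ((s : ℝ) • monomialMean (s ^ 2)) (monomialMean (s ^ 2) * lacunarySum (s ^ 2))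
  rw [← hsplit] at hadd
  simp only [map_smul, LinearMap.smul_apply, smul_eq_mul] at hadd
  linarith

/-- The common building block of `blochPoly N` and of the cross term of `testPoly s ^ 2`, for
`N = s ^ 2`. -/
noncomputable def lacunaryBlock (N k : ℕ) : ℝ[X] :=
  monomialMean N ^ 2 * X ^ lacunaryExponent N k

lemma lacunaryBlock_mem_nonnegCoeffs (N k : ℕ) : lacunaryBlock N k ∈ nonnegCoeffs :=
  mul_mem (pow_mem (monomialMean_mem_nonnegCoeffs N) 2) (pow_mem X_mem_nonnegCoeffs _)

lemma testPoly_sq_sub_mem_nonnegCoeffs (s : ℕ) :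
    testPoly s ^ 2 - (2 * s : ℝ) • ∑ k ∈ Finset.range (s ^ 2), lacunaryBlock (s ^ 2) k ∈
      nonnegCoeffs := by
  have hcross : testPoly s ^ 2 -
      (2 * s : ℝ) • ∑ k ∈ Finset.range (s ^ 2), lacunaryBlock (s ^ 2) k =
        monomialMean (s ^ 2) ^ 2 * ((s : ℝ[X]) ^ 2 + lacunarySum (s ^ 2) ^ 2) := by
    simp only [testPoly, lacunaryBlock, ← Finset.mul_sum, lacunarySum, smul_eq_C_mul, map_mul,
      map_natCast, map_ofNat]
    ring
  rw [hcross]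
  exact mul_mem (pow_mem (monomialMean_mem_nonnegCoeffs _) 2)
    (add_mem (pow_mem (natCast_mem _ s) 2) (pow_mem (lacunarySum_mem_nonnegCoeffs _) 2))

lemma le_lacunaryExponent_mul_weightedPairing_lacunaryBlock {N : ℕ} (hN : N ≠ 0) (k : ℕ) :
    π / (4 * N) ≤ lacunaryExponent N k *
      weightedPairing bergmanWeight (lacunaryBlock N k) (lacunaryBlock N k) := by
  set a := lacunaryExponent N k
  have hNa : 2 * N ≤ a := two_mul_le_lacunaryExponent N k
  have hapos : (0 : ℝ) < a := by exact_mod_cast (by omega : 0 < a)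
  have hdeg : (a + (monomialMean N ^ 2).natDegree + 1 : ℝ) ≤ 2 * a := by
    have := natDegree_pow_le_of_le 2 (natDegree_monomialMean_le N)
    exact_mod_cast (by omega : a + (monomialMean N ^ 2).natDegree + 1 ≤ 2 * a)
  calc π / (4 * N) = a * (π / (2 * a) * (2 * N : ℝ)⁻¹) := by field_simp; norm_num
    _ ≤ a * (π / (a + (monomialMean N ^ 2).natDegree + 1) *
          weightedPairing 1 (monomialMean N ^ 2) (monomialMean N ^ 2)) := by
        gcongr
        exact le_weightedPairing_one_monomialMean_sq hN
    _ ≤ a * weightedPairing bergmanWeight (lacunaryBlock N k) (lacunaryBlock N k) := by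
        gcongr
        exact le_weightedPairing_bergmanWeight_mul_X_pow _ _

/-- The combination of the lacunary blocks with weights the exponents, hence close to the
derivative of `∑ k, lacunaryBlock N k`. Its values are at most `2 / (1 - ‖z‖)`, uniformly in `N`,
so that its primitives are bounded in the Bloch space. -/
noncomputable def blochPoly (N : ℕ) : ℝ[X] :=
  ∑ k ∈ Finset.range N, (lacunaryExponent N k : ℝ) • lacunaryBlock N k

lemma blochPoly_mem_nonnegCoeffs (N : ℕ) : blochPoly N ∈ nonnegCoeffs :=
  sum_mem fun k _ ↦ smul_mem_nonnegCoeffs (Nat.cast_nonneg _) (lacunaryBlock_mem_nonnegCoeffs N k)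

lemma norm_aeval_blochPoly_le_sum (N : ℕ) (z : ℂ) :
    ‖aeval z (blochPoly N)‖ ≤ ∑ k ∈ Finset.range N,
      lacunaryExponent N k * (‖aeval z (monomialMean N)‖ ^ 2 * ‖z‖ ^ lacunaryExponent N k) := by
  rw [blochPoly, map_sum]
  refine norm_sum_le_of_le _ fun k _ ↦ le_of_eq ?_
  rw [map_smul, norm_smul, Real.norm_natCast, lacunaryBlock, map_mul, map_pow, map_pow, aeval_X,
    norm_mul, norm_pow, norm_pow]

lemma one_sub_norm_mul_norm_aeval_blochPoly_le (N : ℕ) {z : ℂ} (hz : ‖z‖ ≤ 1) :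
    (1 - ‖z‖) * ‖aeval z (blochPoly N)‖ ≤ 2 := by
  have : 0 ≤ 1 - ‖z‖ := sub_nonneg.2 hz
  have hmean : ‖aeval z (monomialMean N)‖ ^ 2 ≤ 1 :=
    pow_le_one₀ (norm_nonneg _) (norm_aeval_monomialMean_le_one N hz)
  calc (1 - ‖z‖) * ‖aeval z (blochPoly N)‖
      ≤ (1 - ‖z‖) * ∑ k ∈ Finset.range N,
          lacunaryExponent N k * ‖z‖ ^ lacunaryExponent N k := by
        gcongr
        refine (norm_aeval_blochPoly_le_sum N z).trans ?_
        gcongr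
        exact mul_le_of_le_one_left (by positivity) hmean
    _ ≤ (1 - ‖z‖) * (2 * ∑ n ∈ Finset.range (N * 2 ^ N), ‖z‖ ^ n) := by
        gcongr
        exact sum_lacunaryExponent_mul_pow_le N N (norm_nonneg z) hz
    _ = 2 * (1 - ‖z‖ ^ (N * 2 ^ N)) := by
        rw [← geom_sum_mul_neg]
        ring
    _ ≤ 2 := by linarith [pow_nonneg (norm_nonneg z) (N * 2 ^ N)]

lemma integral_norm_aeval_monomialMean_mul_X_pow_sq_le {N b : ℕ} (hN : N ≠ 0) (hb : 0 < b) :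
    ∫ z in ball (0 : ℂ) 1, ‖aeval z (monomialMean N * X ^ b)‖ ^ 2 ≤ π / b * (N : ℝ)⁻¹ := by
  rw [orthogonalPowers_unitBall.integral_norm_aeval_sq]
  refine (weightedPairing_bergmanWeight_mul_X_pow_le _ hb).trans ?_
  gcongr
  exact weightedPairing_one_monomialMean_le hN

lemma integral_norm_aeval_blochPoly_le {N : ℕ} (hN : N ≠ 0) :
    ∫ z in ball (0 : ℂ) 1, ‖aeval z (blochPoly N)‖ ≤ 2 * π := by
  have hpos : ∀ k, 0 < N * 2 ^ k := fun k ↦ by positivity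
  have hint : ∀ p : ℝ[X], IntegrableOn (fun z : ℂ ↦ ‖aeval z p‖ ^ 2) (ball 0 1) := fun p ↦
    integrableOn_ball_of_continuous ((Polynomial.continuous_aeval p).norm.pow 2) 0 1
  calc ∫ z in ball (0 : ℂ) 1, ‖aeval z (blochPoly N)‖
      ≤ ∫ z in ball (0 : ℂ) 1, ∑ k ∈ Finset.range N,
          lacunaryExponent N k * ‖aeval z (monomialMean N * X ^ (N * 2 ^ k))‖ ^ 2 := by
        refine integral_mono
          (integrableOn_ball_of_continuous (Polynomial.continuous_aeval _).norm 0 1)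
          (integrable_finsetSum _ fun k _ ↦ (hint _).const_mul _) fun z ↦
          (norm_aeval_blochPoly_le_sum N z).trans_eq (Finset.sum_congr rfl fun k _ ↦ ?_)
        rw [map_mul, map_pow, aeval_X, norm_mul, norm_pow, mul_pow, ← pow_mul, mul_two,
          ← lacunaryExponent_eq_add]
    _ = ∑ k ∈ Finset.range N, lacunaryExponent N k *
          ∫ z in ball (0 : ℂ) 1, ‖aeval z (monomialMean N * X ^ (N * 2 ^ k))‖ ^ 2 := by
        rw [integral_finsetSum _ fun k _ ↦ (hint _).const_mul _]
        simp only [integral_const_mul]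
    _ ≤ ∑ k ∈ Finset.range N, lacunaryExponent N k * (π / (N * 2 ^ k : ℕ) * (N : ℝ)⁻¹) := by
        gcongr with k
        exact integral_norm_aeval_monomialMean_mul_X_pow_sq_le hN (hpos k)
    _ = ∑ k ∈ Finset.range N, 2 * π / N := by
        refine Finset.sum_congr rfl fun k _ ↦ ?_
        rw [lacunaryExponent_eq_add]
        push_cast
        field_simp
        norm_num
    _ = 2 * π := by
        rw [Finset.sum_const, Finset.card_range, nsmul_eq_mul]
        field_simp

lemma le_weightedPairing_testPoly_sq_blochPoly {s : ℕ} (hs : s ≠ 0) :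
    s * π / 2 ≤ weightedPairing bergmanWeight (testPoly s ^ 2) (blochPoly (s ^ 2)) := by
  set N := s ^ 2 with hNdef
  have hN : N ≠ 0 := pow_ne_zero 2 hs
  have hcross := weightedPairing_nonneg bergmanWeight_nonneg (testPoly_sq_sub_mem_nonnegCoeffs s)
    (blochPoly_mem_nonnegCoeffs N)
  rw [← hNdef] at hcross
  simp only [map_sub, map_smul, map_sum, LinearMap.sub_apply, LinearMap.smul_apply,
    LinearMap.sum_apply, smul_eq_mul, sub_nonneg] at hcross
  have hdiagonal : ∀ k ∈ Finset.range N, π / (4 * N) ≤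
      weightedPairing bergmanWeight (lacunaryBlock N k) (blochPoly N) := fun k hk ↦ by
    refine (le_lacunaryExponent_mul_weightedPairing_lacunaryBlock hN k).trans ?_
    simp only [blochPoly, map_sum, map_smul, smul_eq_mul]
    exact Finset.single_le_sum (f := fun l ↦ lacunaryExponent N l *
        weightedPairing bergmanWeight (lacunaryBlock N k) (lacunaryBlock N l))
      (fun l _ ↦ mul_nonneg (Nat.cast_nonneg _) (weightedPairing_nonneg bergmanWeight_nonneg
        (lacunaryBlock_mem_nonnegCoeffs N k) (lacunaryBlock_mem_nonnegCoeffs N l))) hk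
  calc s * π / 2 = 2 * s * ∑ k ∈ Finset.range N, π / (4 * N) := by
        rw [Finset.sum_const, Finset.card_range, nsmul_eq_mul]
        field_simp
        norm_num
    _ ≤ 2 * s * ∑ k ∈ Finset.range N,
          weightedPairing bergmanWeight (lacunaryBlock N k) (blochPoly N) := by
        gcongr with k hk
        exact hdiagonal k hk
    _ ≤ weightedPairing bergmanWeight (testPoly s ^ 2) (blochPoly N) := hcross

/-! ### The measure -/

/-- The `j`-th summand of `hankelDensity`: the coefficient `2 ^ (-j)` makes the series converge,
while `testPoly (4 ^ j)` still detects it with size `2 ^ j`. -/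
noncomputable def hankelDensityTerm (j : ℕ) (z : ℂ) : ℂ :=
  ((1 / 2 : ℝ) ^ j : ℝ) * conj (aeval z (blochPoly ((4 ^ j) ^ 2)))

/-- The density with respect to area on the unit disc of the measure that has bounded
reproducing-kernel integrals without being a Hankel measure. -/
noncomputable def hankelDensity (z : ℂ) : ℂ := ∑' j, hankelDensityTerm j z

lemma integrableOn_hankelDensityTerm (j : ℕ) : IntegrableOn (hankelDensityTerm j) (ball 0 1) :=
  integrableOn_ball_of_continuous (continuous_const.mul
    (Complex.continuous_conj.comp (Polynomial.continuous_aeval _))) 0 1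

lemma integral_mul_hankelDensityTerm (g : ℂ → ℂ) (j : ℕ) :
    ∫ z in ball (0 : ℂ) 1, g z * hankelDensityTerm j z =
      ((1 / 2 : ℝ) ^ j : ℝ) *
        ∫ z in ball (0 : ℂ) 1, g z * conj (aeval z (blochPoly ((4 ^ j) ^ 2))) := by
  rw [← integral_const_mul]
  congr 1 with z
  rw [hankelDensityTerm, mul_left_comm]

lemma summable_integral_norm_hankelDensityTerm :
    Summable fun j ↦ ∫ z in ball (0 : ℂ) 1, ‖hankelDensityTerm j z‖ := by
  refine .of_nonneg_of_le (fun j ↦ integral_nonneg fun z ↦ norm_nonneg _) (fun j ↦ ?_)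
    (summable_geometric_two.mul_right (2 * π))
  have hN : (4 ^ j) ^ 2 ≠ 0 := by positivity
  simp only [hankelDensityTerm, norm_mul, norm_real, RCLike.norm_conj, integral_const_mul]
  rw [norm_of_nonneg (by positivity)]
  gcongr
  exact integral_norm_aeval_blochPoly_le hN

lemma integrableOn_hankelDensity : IntegrableOn hankelDensity (ball 0 1) :=
  integrable_tsum_of_summable_integral_norm integrableOn_hankelDensityTerm
    summable_integral_norm_hankelDensityTerm

lemma hasSum_integral_mul_hankelDensity {g : ℂ → ℂ} {K : ℝ} (hg : ContinuousOn g (ball 0 1))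
    (hK : ∀ z ∈ ball (0 : ℂ) 1, ‖g z‖ ≤ K) :
    HasSum (fun j ↦ ∫ z in ball (0 : ℂ) 1, g z * hankelDensityTerm j z)
      (∫ z in ball (0 : ℂ) 1, g z * hankelDensity z) :=
  hasSum_integral_mul_tsum (hg.aestronglyMeasurable measurableSet_ball)
    (ae_restrict_of_forall_mem measurableSet_ball hK) integrableOn_hankelDensityTerm
    summable_integral_norm_hankelDensityTerm

lemma exists_norm_integral_bergmanKernel_mul_hankelDensity_le :
    ∃ C : ℝ, ∀ w ∈ ball (0 : ℂ) 1,
      ‖∫ z in ball (0 : ℂ) 1,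
        (((1 - ‖w‖ ^ 2 : ℝ) : ℂ) / (1 - conj w * z) ^ 2) * hankelDensity z‖ ≤ C := by
  refine ⟨2 * (2 * π * 2), fun w hw ↦ ?_⟩
  have hw₁ : ‖w‖ < 1 := mem_ball_zero_iff.1 hw
  have hne : ∀ z ∈ ball (0 : ℂ) 1, (1 - conj w * z) ^ 2 ≠ 0 := fun z hz ↦
    pow_ne_zero 2 <| sub_ne_zero.2 fun heq ↦
      (norm_conj_mul_lt_one hw₁ (mem_ball_zero_iff.1 hz).le).ne (heq ▸ norm_one)
  have hsum := hasSum_integral_mul_hankelDensity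
    (g := fun z ↦ ((1 - ‖w‖ ^ 2 : ℝ) : ℂ) / (1 - conj w * z) ^ 2)
    (ContinuousOn.div (by fun_prop) (by fun_prop) hne)
    fun z hz ↦ norm_bergmanKernel_le hw₁ (mem_ball_zero_iff.1 hz).le
  rw [← hsum.tsum_eq]
  refine tsum_of_norm_bounded (hasSum_geometric_two.mul_right (2 * π * 2)) fun j ↦ ?_
  rw [integral_mul_hankelDensityTerm, norm_mul, norm_real, norm_of_nonneg (by positivity)]
  gcongr
  exact norm_integral_bergmanKernel_mul_conj_aeval_le hw₁
    (one_sub_norm_mul_norm_aeval_blochPoly_le _ hw₁.le)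

lemma mul_weightedPairing_blochPoly_le_norm_integral_mul_hankelDensity {p : ℝ[X]}
    (hp : p ∈ nonnegCoeffs) (J : ℕ) :
    (1 / 2) ^ J * weightedPairing bergmanWeight p (blochPoly ((4 ^ J) ^ 2)) ≤
      ‖∫ z in ball (0 : ℂ) 1, aeval z p * hankelDensity z‖ := by
  have hcont : Continuous fun z : ℂ ↦ aeval z p := Polynomial.continuous_aeval p
  obtain ⟨K, hK⟩ := (isCompact_closedBall (0 : ℂ) 1).exists_bound_of_continuousOn hcont.continuousOn
  have hsum := hasSum_integral_mul_hankelDensity hcont.continuousOn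
    fun z hz ↦ hK z (ball_subset_closedBall hz)
  simp only [integral_mul_hankelDensityTerm,
    orthogonalPowers_unitBall.integral_aeval_mul_conj_aeval, ← ofReal_mul] at hsum
  refine (le_hasSum (Complex.hasSum_re hsum) J fun j _ ↦ ?_).trans (Complex.re_le_norm _)
  exact mul_nonneg (by positivity)
    (weightedPairing_nonneg bergmanWeight_nonneg hp (blochPoly_mem_nonnegCoeffs _))

lemma two_pow_mul_pi_div_two_le_norm_integral_testPoly_sq (J : ℕ) :
    2 ^ J * (π / 2) ≤
      ‖∫ z in ball (0 : ℂ) 1, aeval z (testPoly (4 ^ J)) ^ 2 * hankelDensity z‖ := by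
  have hpow : (1 / 2 : ℝ) ^ J * 4 ^ J = 2 ^ J := by
    rw [← mul_pow]
    norm_num
  calc 2 ^ J * (π / 2) = (1 / 2) ^ J * ((4 ^ J : ℕ) * π / 2) := by
        rw [← hpow]
        push_cast
        ring
    _ ≤ (1 / 2) ^ J *
          weightedPairing bergmanWeight (testPoly (4 ^ J) ^ 2) (blochPoly ((4 ^ J) ^ 2)) := by
        gcongr
        exact le_weightedPairing_testPoly_sq_blochPoly (by positivity)
    _ ≤ ‖∫ z in ball (0 : ℂ) 1, aeval z (testPoly (4 ^ J)) ^ 2 * hankelDensity z‖ := by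
        simpa only [map_pow] using
          mul_weightedPairing_blochPoly_le_norm_integral_mul_hankelDensity
            (pow_mem (testPoly_mem_nonnegCoeffs (4 ^ J)) 2) J

lemma not_isHankelMeasure_hankelDensity :
    ¬ IsHankelMeasure (volume.restrict (ball 0 1)) hankelDensity := by
  rintro ⟨C, hC⟩
  have hbound : ∀ J : ℕ, 2 ^ J * (π / 2) ≤ C * 4 := fun J ↦
    (two_pow_mul_pi_div_two_le_norm_integral_testPoly_sq J).trans <|
      hC (fun z ↦ aeval z (testPoly (4 ^ J))) (Polynomial.differentiable_aeval _).differentiableOn 4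
        fun r hr ↦ (circleMean_norm_aeval_sq_le _ hr).trans
          (weightedPairing_one_testPoly_le (by positivity))
  obtain ⟨J, hJ⟩ := pow_unbounded_of_one_lt (C * 4 / (π / 2)) one_lt_two
  exact (hbound J).not_gt ((div_lt_iff₀ (by positivity)).1 hJ)

end

/-- There is a complex measure `μ` on `𝔻` (written `dμ = h dν`) satisfying
`sup_{w∈𝔻} |∫_𝔻 (1-|w|²)/(1-w̄z)² dμ(z)| < ∞` which is not a Hankel measure. -/
theorem statement9 :
    ∃ (ν : Measure ℂ) (_ : IsFiniteMeasure ν) (h : ℂ → ℂ),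
      (∀ᵐ z ∂ν, z ∈ Metric.ball (0 : ℂ) 1) ∧ Integrable h ν ∧
      (∃ C : ℝ, ∀ w ∈ Metric.ball (0 : ℂ) 1,
        ‖∫ z, (((1 - ‖w‖ ^ 2 : ℝ) : ℂ) / (1 - (starRingEnd ℂ) w * z) ^ 2) * h z ∂ν‖ ≤ C) ∧
      ¬ IsHankelMeasure ν h :=
  ⟨volume.restrict (ball 0 1), isFiniteMeasure_restrict.2 measure_ball_lt_top.ne, hankelDensity,
    ae_restrict_mem measurableSet_ball, integrableOn_hankelDensity,
    exists_norm_integral_bergmanKernel_mul_hankelDensity_le, not_isHankelMeasure_hankelDensity⟩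
end

section
/- Let 0 < p < ∞ and let f(z) = ∑_{n=0}^∞ a_n z^n where (a_n) is a nonincreasing sequence of nonnegative real numbers. Then f belongs to the space Q_p if and only if a_n = O(1/n). -/
open MeasureTheory Complex Metric

/-- `f` belongs to the space `Q_p`: `f` is analytic on `𝔻` and
`sup_{a∈𝔻} ∫_𝔻 |f'(z)|² (1-|σ_a(z)|²)^p dA(z) < ∞`, where `σ_a(z) = (a-z)/(1-āz)`. -/
def MemQp (p : ℝ) (f : ℂ → ℂ) : Prop :=
  DifferentiableOn ℂ f (Metric.ball 0 1) ∧
    ∃ C : ℝ, ∀ a ∈ Metric.ball (0 : ℂ) 1,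
      (∫⁻ z in Metric.ball (0 : ℂ) 1,
          ENNReal.ofReal (‖deriv f z‖ ^ 2 *
            (1 - ‖(a - z) / (1 - (starRingEnd ℂ) a * z)‖ ^ 2) ^ p)) ≤ ENNReal.ofReal C

/-!
`Q_p` lies in the Bloch space, because the Möbius weight is at least `3 / 4` on the disk of radius
`(1 - |a|) / 2` about `a`, where `|f'|²` has the sub-mean value property. For coefficients that are
nonnegative and nonincreasing, `|f'(1 - 1 / (2N))|` is at least a constant times `N² a_N`, so the
Bloch bound `|f'(x)| ≲ 1 / (1 - x)` gives `a_N ≲ 1 / N`.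

Conversely, if `n |a_n| ≤ C` then the coefficients of `f'` are dominated by those of `C / (1 - z)`.
The identity `1 - |σ_a(z)|² = (1 - |a|²) (1 - |z|²) / |1 - āz|²` writes the integrand of the
`Q_p` seminorm as `|f'(z) (1 - āz)^(-p)|²` times a radial factor. The binomial series of
`(1 - w)^(-p)` has positive coefficients, so by Parseval on circles the integral only grows when
`f'` is replaced by `C / (1 - z)` and `a` by `|a|`. The resulting integrand is at most
`16^p C² |1 - z|⁻² min(s, s⁻¹)^p` with `s = |1 - z| / (1 - |a|)`, whose integral over the plane is
finite and, by scaling, independent of `a`.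
-/

section PolarCoordinates

variable {F G : ℂ → ℝ} {c : ℂ} {r R : ℝ}

theorem ofReal_two_pi_mul_circleAverage (hF : CircleIntegrable F c r)
    (hF₀ : ∀ z ∈ sphere c |r|, 0 ≤ F z) :
    ENNReal.ofReal (2 * Real.pi * Real.circleAverage F c r) =
      ∫⁻ θ in Set.Ioo (-Real.pi) Real.pi, ENNReal.ofReal (F (circleMap c r θ)) := by
  have hperiodic : Function.Periodic (fun θ ↦ F (circleMap c r θ)) (2 * Real.pi) :=
    fun θ ↦ by simp only [periodic_circleMap c r θ]
  have hshift : ∫ θ in (-Real.pi)..Real.pi, F (circleMap c r θ) =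
      2 * Real.pi * Real.circleAverage F c r := by
    have h := hperiodic.intervalIntegral_add_eq (-Real.pi) 0
    rw [show -Real.pi + 2 * Real.pi = Real.pi by ring, zero_add] at h
    rw [h, Real.circleAverage_def, smul_eq_mul, mul_inv_cancel_left₀ Real.two_pi_pos.ne']
  have hint : IntervalIntegrable (fun θ ↦ F (circleMap c r θ)) volume (-Real.pi) Real.pi :=
    hperiodic.intervalIntegrable₀ Real.two_pi_pos.ne' hF _ _
  rw [← hshift, intervalIntegral.integral_of_le (by linarith [Real.pi_pos]),
    integral_Ioc_eq_integral_Ioo, ofReal_integral_eq_lintegral_ofReal]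
  · exact ((intervalIntegrable_iff_integrableOn_Ioo_of_le (by linarith [Real.pi_pos])).1 hint)
  · exact .of_forall fun θ ↦ hF₀ _ (circleMap_mem_sphere' c r θ)

theorem lintegral_eq_lintegral_lintegral_circleMap {φ : ℂ → ENNReal} (hφ : Measurable φ) (c : ℂ) :
    ∫⁻ z, φ z = ∫⁻ r in Set.Ioi (0 : ℝ),
      ENNReal.ofReal r * ∫⁻ θ in Set.Ioo (-Real.pi) Real.pi, φ (circleMap c r θ) := by
  have hcircle (q : ℝ × ℝ) : c + Complex.polarCoord.symm q = circleMap c q.1 q.2 := by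
    rw [Complex.polarCoord_symm_apply, circleMap, exp_mul_I, ofReal_cos, ofReal_sin]
  have hmeas : Measurable fun q : ℝ × ℝ ↦ φ (circleMap c q.1 q.2) := by
    unfold circleMap
    fun_prop
  rw [← lintegral_add_left_eq_self _ c, ← Complex.lintegral_comp_polarCoord_symm]
  simp only [hcircle, smul_eq_mul, polarCoord_target, Measure.volume_eq_prod]
  rw [← Measure.prod_restrict, lintegral_prod _ (by fun_prop)]
  refine lintegral_congr fun r ↦ ?_
  have hsection : Measurable fun θ : ℝ ↦ φ (circleMap c r θ) := hmeas.comp measurable_prodMk_left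
  exact (lintegral_const_mul (ENNReal.ofReal r) hsection :)

theorem lintegral_ball_eq_lintegral_circleAverage (hF : ContinuousOn F (ball c R))
    (hF₀ : ∀ z ∈ ball c R, 0 ≤ F z) :
    ∫⁻ z in ball c R, ENNReal.ofReal (F z) =
      ∫⁻ r in Set.Ioo 0 R,
        ENNReal.ofReal r * ENNReal.ofReal (2 * Real.pi * Real.circleAverage F c r) := by
  classical
  set φ : ℂ → ENNReal := (ball c R).indicator fun z ↦ ENNReal.ofReal (F z) with hφ
  have hφ_meas : Measurable φ := by
    rw [hφ, ← Set.piecewise_eq_indicator]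
    exact (ENNReal.continuous_ofReal.comp_continuousOn hF).measurable_piecewise
      continuousOn_const measurableSet_ball
  have hmem {r : ℝ} (hr : 0 < r) (θ : ℝ) : circleMap c r θ ∈ ball c R ↔ r < R := by
    rw [mem_ball, mem_sphere.1 (circleMap_mem_sphere c hr.le θ)]
  rw [← lintegral_indicator measurableSet_ball,
    lintegral_eq_lintegral_lintegral_circleMap hφ_meas c, ← Set.Ioi_inter_Iio (a := 0),
    Set.inter_comm, ← setLIntegral_indicator measurableSet_Iio]
  refine setLIntegral_congr_fun measurableSet_Ioi fun r (hr : 0 < r) ↦ ?_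
  by_cases hrR : r < R
  · have hsphere : sphere c |r| ⊆ ball c R := by
      rw [abs_of_pos hr]
      exact sphere_subset_ball hrR
    rw [Set.indicator_of_mem (Set.mem_Iio.2 hrR), ofReal_two_pi_mul_circleAverage
      ((hF.mono hsphere).circleIntegrable') fun z hz ↦ hF₀ z (hsphere hz)]
    simp only [hφ, Set.indicator_of_mem ((hmem hr _).2 hrR)]
  · rw [Set.indicator_of_notMem (by simpa using hrR)]
    simp only [hφ, Set.indicator_of_notMem (mt (hmem hr _).1 hrR), lintegral_zero, mul_zero]

theorem lintegral_ball_mono_of_circleAverage_le (hF : ContinuousOn F (ball c R))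
    (hF₀ : ∀ z ∈ ball c R, 0 ≤ F z) (hG : ContinuousOn G (ball c R))
    (hG₀ : ∀ z ∈ ball c R, 0 ≤ G z)
    (hFG : ∀ r ∈ Set.Ioo 0 R, Real.circleAverage F c r ≤ Real.circleAverage G c r) :
    ∫⁻ z in ball c R, ENNReal.ofReal (F z) ≤ ∫⁻ z in ball c R, ENNReal.ofReal (G z) := by
  rw [lintegral_ball_eq_lintegral_circleAverage hF hF₀,
    lintegral_ball_eq_lintegral_circleAverage hG hG₀]
  refine setLIntegral_mono' measurableSet_Ioo fun r hr ↦ ?_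
  have := mul_le_mul_of_nonneg_left (hFG r hr) Real.two_pi_pos.le
  gcongr

end PolarCoordinates

theorem lintegral_comp_norm_sub_div {E : Type*} [NormedAddCommGroup E] [NormedSpace ℝ E]
    [FiniteDimensional ℝ E] [MeasurableSpace E] [BorelSpace E] (μ : Measure E) [μ.IsAddHaarMeasure]
    {φ : ℝ → ℝ} (hφ : Integrable (fun x ↦ φ ‖x‖) μ) (hφ₀ : ∀ s, 0 ≤ s → 0 ≤ φ s) (c : E) {δ : ℝ}
    (hδ : 0 < δ) :
    ∫⁻ x, ENNReal.ofReal (φ (‖c - x‖ / δ)) ∂μ =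
      ENNReal.ofReal (δ ^ Module.finrank ℝ E * ∫ x, φ ‖x‖ ∂μ) := by
  have hscale (x : E) : φ (‖x‖ / δ) = φ ‖δ⁻¹ • x‖ := by
    rw [norm_smul, norm_inv, Real.norm_of_nonneg hδ.le, inv_mul_eq_div]
  rw [← ofReal_integral_eq_lintegral_ofReal]
  · rw [integral_sub_left_eq_self (fun x ↦ φ (‖x‖ / δ)) μ c]
    simp only [hscale]
    rw [Measure.integral_comp_inv_smul μ (fun x ↦ φ ‖x‖), abs_of_nonneg (by positivity),
      smul_eq_mul]
  · simpa only [hscale] using (hφ.comp_smul (inv_ne_zero hδ.ne')).comp_sub_left c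
  · exact .of_forall fun x ↦ hφ₀ _ (by positivity)

section MeanValue

variable {E : Type*} [NormedAddCommGroup E] [NormedSpace ℂ E] [CompleteSpace E]

theorem norm_le_circleAverage_norm {g : ℂ → E} {c : ℂ} {r : ℝ}
    (hg : DiffContOnCl ℂ g (ball c |r|)) :
    ‖g c‖ ≤ Real.circleAverage (fun z ↦ ‖g z‖) c r := by
  rw [← hg.circleAverage, Real.circleAverage_def, Real.circleAverage_def, norm_smul,
    smul_eq_mul, Real.norm_of_nonneg (inv_nonneg.2 Real.two_pi_pos.le)]
  gcongr
  exact intervalIntegral.norm_integral_le_integral_norm Real.two_pi_pos.le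

theorem ofReal_norm_mul_volume_ball_le_lintegral {g : ℂ → E} {c : ℂ} {R : ℝ}
    (hg : DifferentiableOn ℂ g (ball c R)) :
    ENNReal.ofReal ‖g c‖ * volume (ball c R) ≤ ∫⁻ z in ball c R, ENNReal.ofReal ‖g z‖ := by
  rw [← setLIntegral_const]
  refine lintegral_ball_mono_of_circleAverage_le continuousOn_const (fun _ _ ↦ norm_nonneg _)
    hg.continuousOn.norm (fun _ _ ↦ norm_nonneg _) fun r hr ↦ ?_
  rw [Real.circleAverage_const]
  refine norm_le_circleAverage_norm (hg.mono ?_).diffContOnCl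
  rw [abs_of_pos hr.1, closure_ball _ hr.1.ne']
  exact closedBall_subset_ball hr.2

end MeanValue

section MobiusWeight

theorem one_sub_sq_norm_nonneg {E : Type*} [SeminormedAddCommGroup E] {z : E} (hz : ‖z‖ ≤ 1) :
    0 ≤ 1 - ‖z‖ ^ 2 := by
  nlinarith [norm_nonneg z]

/-- The weight `1 - |σ_a(z)|²`, where `σ_a(z) = (a - z) / (1 - āz)`. -/
noncomputable def mobiusWeight (a z : ℂ) : ℝ :=
  1 - ‖(a - z) / (1 - (starRingEnd ℂ) a * z)‖ ^ 2

variable {a z : ℂ}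

theorem one_sub_norm_le_norm_one_sub_conj_mul (ha : ‖a‖ ≤ 1) :
    1 - ‖z‖ ≤ ‖1 - (starRingEnd ℂ) a * z‖ := by
  have htri := norm_sub_norm_le (1 : ℂ) ((starRingEnd ℂ) a * z)
  have hle : ‖(starRingEnd ℂ) a * z‖ ≤ ‖z‖ := by
    rw [norm_mul, RCLike.norm_conj]
    exact mul_le_of_le_one_left (norm_nonneg z) ha
  rw [norm_one] at htri
  linarith

theorem one_sub_norm_le_norm_one_sub_conj_mul' (hz : ‖z‖ ≤ 1) :
    1 - ‖a‖ ≤ ‖1 - (starRingEnd ℂ) a * z‖ := by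
  have h := one_sub_norm_le_norm_one_sub_conj_mul (z := a) hz
  rwa [← RCLike.norm_conj (1 - _), map_sub, map_mul, map_one, conj_conj, mul_comm z] at h

theorem mobiusWeight_eq (ha : ‖a‖ ≤ 1) (hz : ‖z‖ < 1) :
    mobiusWeight a z =
      (1 - ‖a‖ ^ 2) * (1 - ‖z‖ ^ 2) / ‖1 - (starRingEnd ℂ) a * z‖ ^ 2 := by
  have hpos := (sub_pos.2 hz).trans_le (one_sub_norm_le_norm_one_sub_conj_mul ha)
  rw [mobiusWeight, norm_div, div_pow, one_sub_div (by positivity)]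
  congr 1
  simp only [Complex.sq_norm, normSq_apply, sub_re, sub_im, mul_re, mul_im, conj_re, conj_im,
    one_re, one_im]
  ring

theorem mobiusWeight_nonneg (ha : ‖a‖ ≤ 1) (hz : ‖z‖ < 1) : 0 ≤ mobiusWeight a z := by
  rw [mobiusWeight_eq ha hz]
  have := one_sub_sq_norm_nonneg ha
  have := one_sub_sq_norm_nonneg hz.le
  positivity

theorem three_quarters_le_mobiusWeight (ha : ‖a‖ < 1) (hz : ‖z‖ ≤ 1)
    (hza : ‖a - z‖ ≤ (1 - ‖a‖) / 2) : 3 / 4 ≤ mobiusWeight a z := by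
  have hden := one_sub_norm_le_norm_one_sub_conj_mul' (a := a) hz
  have hσ : ‖(a - z) / (1 - (starRingEnd ℂ) a * z)‖ ≤ 1 / 2 := by
    rw [norm_div, div_le_iff₀ (by linarith)]
    linarith
  rw [mobiusWeight]
  nlinarith [norm_nonneg ((a - z) / (1 - (starRingEnd ℂ) a * z))]

theorem sq_norm_mul_mobiusWeight_rpow (w : ℂ) (p : ℝ) (ha : ‖a‖ ≤ 1) (hz : ‖z‖ < 1) :
    ‖w‖ ^ 2 * mobiusWeight a z ^ p =
      ‖w * ((1 - (starRingEnd ℂ) a * z) ^ (p : ℂ))⁻¹‖ ^ 2 *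
        ((1 - ‖a‖ ^ 2) * (1 - ‖z‖ ^ 2)) ^ p := by
  have hpos := (sub_pos.2 hz).trans_le (one_sub_norm_le_norm_one_sub_conj_mul ha)
  have hnum := mul_nonneg (one_sub_sq_norm_nonneg ha) (one_sub_sq_norm_nonneg hz.le)
  rw [mobiusWeight_eq ha hz, Real.div_rpow hnum (by positivity), norm_mul, norm_inv,
    norm_cpow_real, mul_pow, inv_pow, ← Real.rpow_natCast_mul hpos.le,
    ← Real.rpow_mul_natCast hpos.le, mul_comm p]
  field_simp

end MobiusWeight

/-- The Bloch space: analytic functions on the unit disk for which `(1 - |z|²) |f'(z)|` is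
bounded. -/
def MemBloch (f : ℂ → ℂ) : Prop :=
  DifferentiableOn ℂ f (ball 0 1) ∧ ∃ M, ∀ z ∈ ball (0 : ℂ) 1, (1 - ‖z‖ ^ 2) * ‖deriv f z‖ ≤ M

theorem ofReal_sq_norm_deriv_le_lintegral {p : ℝ} {f : ℂ → ℂ} {a : ℂ} (hp : 0 ≤ p) (ha : ‖a‖ < 1)
    (hf : DifferentiableOn ℂ f (ball 0 1)) :
    ENNReal.ofReal ((3 / 4) ^ p * ‖deriv f a‖ ^ 2 * (Real.pi * ((1 - ‖a‖) / 2) ^ 2)) ≤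
      ∫⁻ z in ball (0 : ℂ) 1, ENNReal.ofReal (‖deriv f z‖ ^ 2 * mobiusWeight a z ^ p) := by
  set R := (1 - ‖a‖) / 2 with hR
  have hsub : ball a R ⊆ ball (0 : ℂ) 1 := ball_subset_ball' (by rw [dist_zero_right]; linarith)
  have hderiv : DifferentiableOn ℂ (fun z ↦ deriv f z ^ 2) (ball a R) :=
    ((hf.deriv isOpen_ball).mono hsub).pow 2
  have hweight (z : ℂ) (hz : z ∈ ball a R) : 3 / 4 ≤ mobiusWeight a z :=
    three_quarters_le_mobiusWeight ha (mem_ball_zero_iff.1 (hsub hz)).le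
      (mem_ball_iff_norm'.1 hz).le
  calc ENNReal.ofReal ((3 / 4) ^ p * ‖deriv f a‖ ^ 2 * (Real.pi * R ^ 2))
      = ENNReal.ofReal ((3 / 4) ^ p) * (ENNReal.ofReal ‖deriv f a ^ 2‖ * volume (ball a R)) := by
        rw [Complex.volume_ball, norm_pow, ← ENNReal.ofReal_pow (by linarith),
          ← ENNReal.ofReal_coe_nnreal, NNReal.coe_real_pi, ← ENNReal.ofReal_mul (by positivity),
          ← ENNReal.ofReal_mul (by positivity), ← ENNReal.ofReal_mul (by positivity)]
        ring_nf
    _ ≤ ENNReal.ofReal ((3 / 4) ^ p) * ∫⁻ z in ball a R, ENNReal.ofReal ‖deriv f z ^ 2‖ := by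
        gcongr
        exact ofReal_norm_mul_volume_ball_le_lintegral hderiv
    _ = ∫⁻ z in ball a R, ENNReal.ofReal (‖deriv f z‖ ^ 2 * (3 / 4) ^ p) := by
        rw [← lintegral_const_mul' _ _ ENNReal.ofReal_ne_top]
        refine lintegral_congr fun z ↦ ?_
        rw [← ENNReal.ofReal_mul (by positivity), norm_pow, mul_comm]
    _ ≤ ∫⁻ z in ball a R, ENNReal.ofReal (‖deriv f z‖ ^ 2 * mobiusWeight a z ^ p) := by
        refine setLIntegral_mono' measurableSet_ball fun z hz ↦ ?_
        gcongr
        exact hweight z hz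
    _ ≤ _ := lintegral_mono_set hsub

theorem MemQp.memBloch {p : ℝ} {f : ℂ → ℂ} (hp : 0 ≤ p) (hf : MemQp p f) : MemBloch f := by
  obtain ⟨hdiff, C, hC⟩ := hf
  set K := (3 / 4 : ℝ) ^ p * Real.pi with hK
  have hKpos : 0 < K := by positivity
  refine ⟨hdiff, Real.sqrt (16 * |C| / K), fun a ha ↦ Real.le_sqrt_of_sq_le ?_⟩
  have ha' : ‖a‖ < 1 := mem_ball_zero_iff.1 ha
  have hpoint : (3 / 4) ^ p * ‖deriv f a‖ ^ 2 * (Real.pi * ((1 - ‖a‖) / 2) ^ 2) ≤ |C| :=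
    (ENNReal.ofReal_le_ofReal_iff (abs_nonneg C)).1 <|
      (ofReal_sq_norm_deriv_le_lintegral hp ha' hdiff).trans <| (hC a ha).trans <|
        ENNReal.ofReal_le_ofReal (le_abs_self C)
  have hfactor : 1 - ‖a‖ ^ 2 ≤ 2 * (1 - ‖a‖) := by nlinarith [sq_nonneg (1 - ‖a‖)]
  rw [le_div_iff₀ hKpos]
  calc ((1 - ‖a‖ ^ 2) * ‖deriv f a‖) ^ 2 * K
      ≤ (2 * (1 - ‖a‖) * ‖deriv f a‖) ^ 2 * K := by
        have := one_sub_sq_norm_nonneg ha'.le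
        gcongr
    _ = 16 * ((3 / 4) ^ p * ‖deriv f a‖ ^ 2 * (Real.pi * ((1 - ‖a‖) / 2) ^ 2)) := by
        rw [hK]; ring
    _ ≤ 16 * |C| := by gcongr

theorem sum_sq_norm_mul_pow_eq_circleAverage (c : ℕ → ℂ) (r : ℝ) (N : ℕ) :
    ∑ n ∈ Finset.range N, ‖c n‖ ^ 2 * r ^ (2 * n) =
      Real.circleAverage (fun z ↦ ‖∑ n ∈ Finset.range N, c n * z ^ n‖ ^ 2) 0 r := by
  set P : Polynomial ℂ := ∑ n ∈ Finset.range N, Polynomial.monomial n (c n * r ^ n) with hP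
  have hcoeff (n : ℕ) : P.coeff n = if n < N then c n * r ^ n else 0 := by
    simp only [hP, Polynomial.finsetSum_coeff, Polynomial.coeff_monomial, Finset.sum_ite_eq',
      Finset.mem_range]
  have hsupp : P.support ⊆ Finset.range N := fun n hn ↦ by
    by_contra hnN
    exact Polynomial.mem_support_iff.1 hn (by rw [hcoeff, if_neg (by simpa using hnN)])
  rw [Real.circleAverage_eq_circleAverage_zero_one]
  have heval (z : ℂ) : ∑ n ∈ Finset.range N, c n * (r * z + 0) ^ n = P.eval z := by
    simp only [hP, Polynomial.eval_finsetSum, Polynomial.eval_monomial, add_zero, mul_pow,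
      mul_assoc]
  simp only [heval]
  rw [← P.sum_sq_norm_coeff_eq_circleAverage, Finset.sum_subset hsupp fun n _ hn ↦ by
    rw [Polynomial.notMem_support_iff.1 hn, norm_zero, zero_pow two_ne_zero]]
  refine Finset.sum_congr rfl fun n hn ↦ ?_
  rw [hcoeff, if_pos (Finset.mem_range.1 hn), norm_mul, mul_pow, norm_pow, norm_real,
    Real.norm_eq_abs, pow_right_comm, sq_abs, ← pow_mul]

/-- `g` is the sum of the power series with coefficients `c` on the open unit disk. -/
def HasDiskSeries (g : ℂ → ℂ) (c : ℕ → ℂ) : Prop :=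
  ∀ z ∈ ball (0 : ℂ) 1, HasSum (fun n ↦ c n * z ^ n) (g z)

namespace HasDiskSeries

variable {g h : ℂ → ℂ} {c d : ℕ → ℂ} {r : ℝ}

theorem of_norm_le {B : ℝ} (hc : ∀ n, ‖c n‖ ≤ B) :
    HasDiskSeries (fun z ↦ ∑' n, c n * z ^ n) c := by
  intro z hz
  have hz' : ‖z‖ < 1 := mem_ball_zero_iff.1 hz
  refine (Summable.of_norm_bounded
    ((summable_geometric_of_lt_one (norm_nonneg z) hz').mul_left B) fun n ↦ ?_).hasSum
  rw [norm_mul, norm_pow]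
  gcongr
  exact hc n

theorem summable_norm_mul_pow (hg : HasDiskSeries g c) (hr₀ : 0 ≤ r) (hr₁ : r < 1) :
    Summable fun n ↦ ‖c n‖ * r ^ n := by
  have hmem : (r : ℂ) ∈ ball (0 : ℂ) 1 := by
    rwa [mem_ball_zero_iff, norm_real, Real.norm_of_nonneg hr₀]
  simpa only [norm_mul, norm_pow, norm_real, Real.norm_of_nonneg hr₀] using
    (hg r hmem).summable.norm

theorem eqOn_tsum (hg : HasDiskSeries g c) :
    Set.EqOn g (fun z ↦ ∑' n, c n * z ^ n) (ball 0 1) :=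
  fun z hz ↦ (hg z hz).tsum_eq.symm

theorem differentiableAt_and_hasSum_deriv (hg : HasDiskSeries g c) {z : ℂ}
    (hz : z ∈ ball (0 : ℂ) 1) :
    DifferentiableAt ℂ g z ∧ HasSum (fun n ↦ c n * (n * z ^ (n - 1))) (deriv g z) := by
  obtain ⟨ρ, hzρ, hρ⟩ := exists_between (mem_ball_zero_iff.1 hz)
  have hsum := hg.summable_norm_mul_pow ((norm_nonneg z).trans hzρ.le) hρ
  have hdiff (n : ℕ) : DifferentiableOn ℂ (fun w ↦ c n * w ^ n) (ball 0 ρ) := by fun_prop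
  have hle (n : ℕ) (w : ℂ) (hw : w ∈ ball (0 : ℂ) ρ) : ‖c n * w ^ n‖ ≤ ‖c n‖ * ρ ^ n := by
    rw [norm_mul, norm_pow]
    gcongr
    exact (mem_ball_zero_iff.1 hw).le
  have hzρ' : z ∈ ball (0 : ℂ) ρ := mem_ball_zero_iff.2 hzρ
  have heq := hg.eqOn_tsum.eventuallyEq_of_mem (isOpen_ball.mem_nhds hz)
  refine ⟨heq.differentiableAt_iff.2 <|
    (differentiableOn_tsum_of_summable_norm hsum hdiff isOpen_ball hle).differentiableAt
      (isOpen_ball.mem_nhds hzρ'), ?_⟩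
  rw [heq.deriv_eq]
  simpa only [deriv_const_mul_field, deriv_pow_field] using
    hasSum_deriv_of_summable_norm hsum hdiff isOpen_ball hle hzρ'

theorem differentiableOn (hg : HasDiskSeries g c) : DifferentiableOn ℂ g (ball 0 1) :=
  fun _ hz ↦ (hg.differentiableAt_and_hasSum_deriv hz).1.differentiableWithinAt

protected theorem deriv (hg : HasDiskSeries g c) :
    HasDiskSeries (deriv g) fun n ↦ (n + 1) * c (n + 1) := by
  intro z hz
  have hshift := (hasSum_nat_add_iff' 1).2 (hg.differentiableAt_and_hasSum_deriv hz).2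
  simp only [Finset.sum_range_one, Nat.cast_zero, zero_mul, mul_zero, sub_zero, Nat.cast_add,
    Nat.cast_one, Nat.add_sub_cancel] at hshift
  exact hshift.congr_fun fun n ↦ by ring

open Finset.HasAntidiagonal in
theorem mul (hg : HasDiskSeries g c) (hh : HasDiskSeries h d) :
    HasDiskSeries (fun z ↦ g z * h z) fun n ↦ ∑ kl ∈ antidiagonal n, c kl.1 * d kl.2 := by
  intro z hz
  have hg' := (hg z hz).summable.norm
  have hh' := (hh z hz).summable.norm
  have hcoeff (n : ℕ) : (∑ kl ∈ antidiagonal n, c kl.1 * d kl.2) * z ^ n =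
      ∑ kl ∈ antidiagonal n, c kl.1 * z ^ kl.1 * (d kl.2 * z ^ kl.2) := by
    rw [Finset.sum_mul]
    refine Finset.sum_congr rfl fun kl hkl ↦ ?_
    rw [← mem_antidiagonal.1 hkl, pow_add]
    ring
  simp only [hcoeff]
  rw [← (hg z hz).tsum_eq, ← (hh z hz).tsum_eq,
    tsum_mul_tsum_eq_tsum_sum_antidiagonal_of_summable_norm hg' hh']
  exact (summable_norm_sum_mul_antidiagonal_of_summable_norm hg' hh').of_norm.hasSum

theorem hasSum_sq_norm_mul_pow (hg : HasDiskSeries g c) (hr₀ : 0 ≤ r) (hr₁ : r < 1) :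
    HasSum (fun n ↦ ‖c n‖ ^ 2 * r ^ (2 * n)) (Real.circleAverage (fun z ↦ ‖g z‖ ^ 2) 0 r) := by
  rw [hasSum_iff_tendsto_nat_of_nonneg (fun n ↦ by positivity)]
  simp only [sum_sq_norm_mul_pow_eq_circleAverage, Real.circleAverage_def]
  have hnorm (θ : ℝ) : ‖circleMap 0 r θ‖ = r := by simp [abs_of_nonneg hr₀]
  refine (intervalIntegral.tendsto_integral_filter_of_dominated_convergence
    (fun _ ↦ (∑' n, ‖c n‖ * r ^ n) ^ 2) (.of_forall fun N ↦ ?_)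
    (.of_forall fun N ↦ .of_forall fun θ _ ↦ ?_) intervalIntegrable_const
    (.of_forall fun θ _ ↦ ?_)).const_smul _
  · exact Continuous.aestronglyMeasurable (by fun_prop)
  · rw [norm_pow, norm_norm]
    gcongr
    refine (norm_sum_le _ _).trans ?_
    simp only [norm_mul, norm_pow, hnorm]
    exact (hg.summable_norm_mul_pow hr₀ hr₁).sum_le_tsum _ fun n _ ↦ by positivity
  · have hmem : circleMap 0 r θ ∈ ball (0 : ℂ) 1 := by rwa [mem_ball_zero_iff, hnorm]
    exact (hg _ hmem).tendsto_sum_nat.norm.pow 2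

theorem circleAverage_sq_norm_le {D : ℕ → ℝ} (hg : HasDiskSeries g c)
    (hh : HasDiskSeries h fun n ↦ D n) (hcD : ∀ n, ‖c n‖ ≤ D n) (hr₀ : 0 ≤ r) (hr₁ : r < 1) :
    Real.circleAverage (fun z ↦ ‖g z‖ ^ 2) 0 r ≤ Real.circleAverage (fun z ↦ ‖h z‖ ^ 2) 0 r := by
  refine hasSum_le (fun n ↦ ?_) (hg.hasSum_sq_norm_mul_pow hr₀ hr₁)
    (hh.hasSum_sq_norm_mul_pow hr₀ hr₁)
  rw [norm_real]
  gcongr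
  exact (hcD n).trans (Real.le_norm_self _)

theorem sum_range_le_norm {d : ℕ → ℝ} {x : ℝ}
    (hg : HasDiskSeries g fun n ↦ d n) (hd : ∀ n, 0 ≤ d n) (hx₀ : 0 ≤ x) (hx₁ : x < 1) (N : ℕ) :
    ∑ n ∈ Finset.range N, d n * x ^ n ≤ ‖g x‖ := by
  have hmem : (x : ℂ) ∈ ball (0 : ℂ) 1 := by
    rwa [mem_ball_zero_iff, norm_real, Real.norm_of_nonneg hx₀]
  have hre : HasSum (fun n ↦ d n * x ^ n) (g x).re :=
    (hasSum_re (hg x hmem)).congr_fun fun n ↦ by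
      simp only [← ofReal_pow, ← ofReal_mul, ofReal_re]
  exact (sum_le_hasSum _ (fun n _ ↦ mul_nonneg (hd n) (pow_nonneg hx₀ n)) hre).trans (re_le_norm _)

end HasDiskSeries

theorem sq_div_four_le_sum_range {N : ℕ} (hN : 0 < N) :
    (N : ℝ) ^ 2 / 4 ≤ ∑ n ∈ Finset.range N, ((n : ℝ) + 1) * (1 - 1 / (2 * N)) ^ n := by
  have hN' : (1 : ℝ) ≤ N := by exact_mod_cast hN
  have hhalf : 1 / (2 * N : ℝ) ≤ 1 / 2 := by
    gcongr
    linarith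
  have hpow : ∀ n ∈ Finset.range N, (1 / 2 : ℝ) ≤ (1 - 1 / (2 * N)) ^ n := by
    intro n hn
    have hn' : (n : ℝ) * (1 / (2 * N)) ≤ 1 / 2 := by
      rw [mul_one_div, div_le_div_iff₀ (by positivity) two_pos]
      have : (n : ℝ) ≤ N := by exact_mod_cast (Finset.mem_range.1 hn).le
      linarith
    have hbernoulli := one_add_mul_le_pow (a := -(1 / (2 * N : ℝ))) (by linarith) n
    rw [← sub_eq_add_neg] at hbernoulli
    linarith
  have hgauss : ∑ n ∈ Finset.range N, ((n : ℝ) + 1) = N * (N + 1) / 2 := by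
    clear * -
    induction N with
    | zero => simp
    | succ N ih =>
      rw [Finset.sum_range_succ, ih]
      push_cast
      ring
  calc (N : ℝ) ^ 2 / 4 ≤ N * (N + 1) / 2 * (1 / 2) := by nlinarith
    _ = ∑ n ∈ Finset.range N, ((n : ℝ) + 1) * (1 / 2) := by rw [← hgauss, Finset.sum_mul]
    _ ≤ _ := Finset.sum_le_sum fun n hn ↦ by
        gcongr
        exact hpow n hn

theorem HasDiskSeries.mul_sq_div_four_le_norm_deriv {f : ℂ → ℂ} {a : ℕ → ℝ}
    (hf : HasDiskSeries f fun n ↦ a n) (ha : Antitone a) (ha₀ : ∀ n, 0 ≤ a n) {N : ℕ}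
    (hN : 0 < N) : a N * (N ^ 2 / 4) ≤ ‖deriv f (1 - 1 / (2 * N) : ℝ)‖ := by
  have hN' : (1 : ℝ) ≤ N := by exact_mod_cast hN
  set x : ℝ := 1 - 1 / (2 * N) with hx
  have hx₁ : x < 1 := sub_lt_self _ (by positivity)
  have hx₀ : 0 ≤ x := by
    rw [hx, sub_nonneg, div_le_one (by positivity)]
    linarith
  have hderiv : HasDiskSeries (deriv f) fun n ↦ (((n + 1) * a (n + 1) : ℝ) : ℂ) := by
    simpa only [ofReal_mul, ofReal_add, ofReal_natCast, ofReal_one] using hf.deriv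
  calc a N * (N ^ 2 / 4)
      ≤ a N * ∑ n ∈ Finset.range N, ((n : ℝ) + 1) * x ^ n :=
        mul_le_mul_of_nonneg_left (sq_div_four_le_sum_range hN) (ha₀ N)
    _ ≤ ∑ n ∈ Finset.range N, ((n + 1) * a (n + 1)) * x ^ n := by
        rw [Finset.mul_sum]
        refine Finset.sum_le_sum fun n hn ↦ ?_
        have := ha (Nat.succ_le_of_lt (Finset.mem_range.1 hn))
        rw [← mul_assoc, mul_comm (a N)]
        gcongr
    _ ≤ ‖deriv f x‖ :=
        hderiv.sum_range_le_norm (fun n ↦ mul_nonneg (by positivity) (ha₀ _)) hx₀ hx₁ N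

theorem MemBloch.exists_mul_coeff_le {f : ℂ → ℂ} {a : ℕ → ℝ} (hf : MemBloch f)
    (hfa : HasDiskSeries f fun n ↦ a n) (ha : Antitone a) (ha₀ : ∀ n, 0 ≤ a n) :
    ∃ C, ∀ n : ℕ, n * a n ≤ C := by
  obtain ⟨-, M, hM⟩ := hf
  refine ⟨max (8 * M) 0, fun N ↦ ?_⟩
  obtain rfl | hN := N.eq_zero_or_pos
  · rw [Nat.cast_zero, zero_mul]
    exact le_max_right _ _
  have hN' : (1 : ℝ) ≤ N := by exact_mod_cast hN
  have hlower := hfa.mul_sq_div_four_le_norm_deriv ha ha₀ hN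
  set t : ℝ := 1 / (2 * N) with ht
  have ht₀ : 0 < t := by positivity
  have ht₁ : t ≤ 1 := by
    rw [ht, div_le_one (by positivity)]
    linarith
  have hnorm : ‖((1 - t : ℝ) : ℂ)‖ = 1 - t := by rw [norm_real, Real.norm_of_nonneg (by linarith)]
  have hupper := hM (1 - t : ℝ) (mem_ball_zero_iff.2 (by linarith))
  rw [hnorm] at hupper
  refine le_max_of_le_left ?_
  calc N * a N = 8 * (t * (a N * (N ^ 2 / 4))) := by rw [ht]; field_simp; ring
    _ ≤ 8 * ((1 - (1 - t) ^ 2) * ‖deriv f (1 - t : ℝ)‖) := by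
        have hgap : t ≤ 1 - (1 - t) ^ 2 := by nlinarith
        exact mul_le_mul_of_nonneg_left
          (mul_le_mul hgap hlower (mul_nonneg (ha₀ N) (by positivity)) (by linarith)) (by norm_num)
    _ ≤ 8 * M := by gcongr

theorem multichoose_pos {R : Type*} [Ring R] [LinearOrder R] [IsStrictOrderedRing R]
    [BinomialRing R] {x : R} (hx : 0 < x) (n : ℕ) : 0 < Ring.multichoose x n := by
  have h := Ring.factorial_nsmul_multichoose_eq_ascPochhammer x n
  rw [Polynomial.ascPochhammer_smeval_eq_eval] at h
  rw [← nsmul_pos_iff n.factorial_ne_zero, h]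
  exact ascPochhammer_pos n x hx

namespace HasDiskSeries

variable {g h : ℂ → ℂ} {c : ℕ → ℂ}

theorem inv_one_sub_cpow (p : ℝ) :
    HasDiskSeries (fun z ↦ ((1 - z) ^ (p : ℂ))⁻¹) fun n ↦ (Ring.multichoose p n : ℝ) := by
  intro z hz
  have hsum := (one_div_one_sub_cpow_hasFPowerSeriesOnBall_zero p).hasSum
    (y := z) (by simpa [enorm_eq_nnnorm, ← NNReal.coe_lt_one] using hz)
  rw [zero_add, one_div] at hsum
  simp only [FormalMultilinearSeries.ofScalars_apply_eq, smul_eq_mul, ← Ring.multichoose_eq]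
    at hsum
  simpa only [← ofRealHom_eq_coe, Ring.map_multichoose] using hsum

theorem const_mul_inv_one_sub (C : ℂ) : HasDiskSeries (fun z ↦ C * (1 - z)⁻¹) fun _ ↦ C :=
  fun _ hz ↦ (hasSum_geometric_of_norm_lt_one (mem_ball_zero_iff.1 hz)).mul_left C

theorem comp_const_mul (hg : HasDiskSeries g c) {α : ℂ} (hα : ‖α‖ ≤ 1) :
    HasDiskSeries (fun z ↦ g (α * z)) fun n ↦ c n * α ^ n := by
  intro z hz
  have hmem : α * z ∈ ball (0 : ℂ) 1 := by
    rw [mem_ball_zero_iff, norm_mul] at *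
    exact (mul_le_of_le_one_left (norm_nonneg z) hα).trans_lt hz
  simpa only [mul_pow, mul_assoc] using hg _ hmem

theorem lintegral_sq_norm_mul_le {D : ℕ → ℝ} {ω : ℝ → ℝ} (hg : HasDiskSeries g c)
    (hh : HasDiskSeries h fun n ↦ D n) (hcD : ∀ n, ‖c n‖ ≤ D n)
    (hω : ContinuousOn ω (Set.Ico 0 1)) (hω₀ : ∀ r ∈ Set.Ico 0 1, 0 ≤ ω r) :
    ∫⁻ z in ball (0 : ℂ) 1, ENNReal.ofReal (‖g z‖ ^ 2 * ω ‖z‖) ≤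
      ∫⁻ z in ball (0 : ℂ) 1, ENNReal.ofReal (‖h z‖ ^ 2 * ω ‖z‖) := by
  have hnorm : Set.MapsTo norm (ball (0 : ℂ) 1) (Set.Ico 0 1) :=
    fun z hz ↦ ⟨norm_nonneg z, mem_ball_zero_iff.1 hz⟩
  have hcont {k : ℂ → ℂ} (hk : DifferentiableOn ℂ k (ball 0 1)) :
      ContinuousOn (fun z ↦ ‖k z‖ ^ 2 * ω ‖z‖) (ball 0 1) :=
    (hk.continuousOn.norm.pow 2).mul (hω.comp continuous_norm.continuousOn hnorm)
  have hnonneg (k : ℂ → ℂ) : ∀ z ∈ ball (0 : ℂ) 1, 0 ≤ ‖k z‖ ^ 2 * ω ‖z‖ :=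
    fun z hz ↦ mul_nonneg (by positivity) (hω₀ _ (hnorm hz))
  have haverage (k : ℂ → ℂ) {r : ℝ} (hr : 0 < r) :
      Real.circleAverage (fun z ↦ ‖k z‖ ^ 2 * ω ‖z‖) 0 r =
        ω r * Real.circleAverage (fun z ↦ ‖k z‖ ^ 2) 0 r := by
    rw [← smul_eq_mul, ← Real.circleAverage_fun_smul]
    refine Real.circleAverage_congr_sphere fun z hz ↦ ?_
    rw [mem_sphere_zero_iff_norm, abs_of_pos hr] at hz
    simp only [hz, smul_eq_mul, mul_comm]
  refine lintegral_ball_mono_of_circleAverage_le (hcont hg.differentiableOn) (hnonneg g)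
    (hcont hh.differentiableOn) (hnonneg h) fun r hr ↦ ?_
  rw [haverage g hr.1, haverage h hr.1]
  exact mul_le_mul_of_nonneg_left (hg.circleAverage_sq_norm_le hh hcD hr.1.le hr.2)
    (hω₀ r ⟨hr.1.le, hr.2⟩)

end HasDiskSeries

section Majorant

open Finset Finset.HasAntidiagonal

theorem norm_sum_antidiagonal_le {A R : Type*} [AddMonoid A] [HasAntidiagonal A]
    [NonUnitalSeminormedRing R] {c d : A → R} {C D : A → ℝ} (hc : ∀ n, ‖c n‖ ≤ C n)
    (hd : ∀ n, ‖d n‖ ≤ D n) (n : A) :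
    ‖∑ kl ∈ antidiagonal n, c kl.1 * d kl.2‖ ≤ ∑ kl ∈ antidiagonal n, C kl.1 * D kl.2 := by
  refine norm_sum_le_of_le _ fun kl _ ↦ ?_
  exact (norm_mul_le _ _).trans <|
    mul_le_mul (hc _) (hd _) (norm_nonneg _) ((norm_nonneg _).trans (hc _))

theorem setLIntegral_sq_norm_mul_mobiusWeight_rpow (g : ℂ → ℂ) (p : ℝ) {a : ℂ} (ha : ‖a‖ ≤ 1) :
    ∫⁻ z in ball (0 : ℂ) 1, ENNReal.ofReal (‖g z‖ ^ 2 * mobiusWeight a z ^ p) =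
      ∫⁻ z in ball (0 : ℂ) 1, ENNReal.ofReal
        (‖g z * ((1 - (starRingEnd ℂ) a * z) ^ (p : ℂ))⁻¹‖ ^ 2 *
          ((1 - ‖a‖ ^ 2) * (1 - ‖z‖ ^ 2)) ^ p) :=
  setLIntegral_congr_fun measurableSet_ball fun z hz ↦ by
    rw [sq_norm_mul_mobiusWeight_rpow _ p ha (mem_ball_zero_iff.1 hz)]

theorem HasDiskSeries.lintegral_sq_norm_mul_mobiusWeight_le {g h : ℂ → ℂ} {c : ℕ → ℂ}
    {D : ℕ → ℝ} {p : ℝ} (hg : HasDiskSeries g c) (hh : HasDiskSeries h fun n ↦ D n)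
    (hcD : ∀ n, ‖c n‖ ≤ D n) (hp : 0 < p) {a : ℂ} (ha : ‖a‖ < 1) :
    ∫⁻ z in ball (0 : ℂ) 1, ENNReal.ofReal (‖g z‖ ^ 2 * mobiusWeight a z ^ p) ≤
      ∫⁻ z in ball (0 : ℂ) 1, ENNReal.ofReal (‖h z‖ ^ 2 * mobiusWeight ‖a‖ z ^ p) := by
  have ha' : ‖(‖a‖ : ℂ)‖ < 1 := by rwa [norm_real, norm_norm]
  have hconj : ‖(starRingEnd ℂ) a‖ ≤ 1 := (RCLike.norm_conj a).trans_le ha.le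
  have hleft := hg.mul ((inv_one_sub_cpow p).comp_const_mul hconj)
  have hright := hh.mul ((inv_one_sub_cpow p).comp_const_mul ha'.le)
  simp only [← ofReal_pow, ← ofReal_mul, ← ofReal_sum] at hright
  have hbinom (n : ℕ) : ‖((Ring.multichoose p n : ℝ) : ℂ) * (starRingEnd ℂ) a ^ n‖ ≤
      Ring.multichoose p n * ‖a‖ ^ n := by
    rw [norm_mul, norm_pow, RCLike.norm_conj, norm_real,
      Real.norm_of_nonneg (multichoose_pos hp n).le]
  have hω : ContinuousOn (fun r : ℝ ↦ ((1 - ‖a‖ ^ 2) * (1 - r ^ 2)) ^ p) (Set.Ico 0 1) :=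
    ContinuousOn.rpow_const (by fun_prop) fun _ _ ↦ .inr hp.le
  have hω₀ : ∀ r ∈ Set.Ico (0 : ℝ) 1, 0 ≤ ((1 - ‖a‖ ^ 2) * (1 - r ^ 2)) ^ p := fun r hr ↦
    Real.rpow_nonneg (mul_nonneg (one_sub_sq_norm_nonneg ha.le) (by nlinarith [hr.1, hr.2])) p
  rw [setLIntegral_sq_norm_mul_mobiusWeight_rpow g p ha.le,
    setLIntegral_sq_norm_mul_mobiusWeight_rpow h p ha'.le, conj_ofReal, norm_real, norm_norm]
  exact hleft.lintegral_sq_norm_mul_le hright (fun n ↦ norm_sum_antidiagonal_le hcD hbinom n) hω hω₀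

end Majorant

section Kernel

variable {x : ℝ} {z : ℂ}

theorem one_sub_le_norm_one_sub_mul (hx₀ : 0 ≤ x) (hz : ‖z‖ ≤ 1) : 1 - x ≤ ‖1 - x * z‖ := by
  simpa only [conj_ofReal, norm_real, Real.norm_of_nonneg hx₀] using
    one_sub_norm_le_norm_one_sub_conj_mul' (a := x) hz

theorem norm_one_sub_le_two_mul_norm_one_sub_mul (hx₀ : 0 ≤ x) (hx₁ : x ≤ 1) (hz : ‖z‖ ≤ 1) :
    ‖1 - z‖ ≤ 2 * ‖1 - x * z‖ := by
  have hgap := one_sub_le_norm_one_sub_mul hx₀ hz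
  calc ‖1 - z‖ = ‖(1 - x * z) - (1 - x : ℝ) * z‖ := by push_cast; ring_nf
    _ ≤ ‖1 - x * z‖ + (1 - x) * ‖z‖ := by
        refine (norm_sub_le _ _).trans_eq ?_
        rw [norm_mul, norm_real, Real.norm_of_nonneg (sub_nonneg.2 hx₁)]
    _ ≤ 2 * ‖1 - x * z‖ := by nlinarith [sub_nonneg.2 hx₁]

theorem mobiusWeight_ofReal_le (hx₀ : 0 ≤ x) (hx₁ : x < 1) (hz : ‖z‖ < 1) :
    mobiusWeight x z ≤ 16 * min (‖1 - z‖ / (1 - x)) (‖1 - z‖ / (1 - x))⁻¹ := by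
  have hnorm : ‖(x : ℂ)‖ = x := by rw [norm_real, Real.norm_of_nonneg hx₀]
  have hzu : 1 - ‖z‖ ≤ ‖1 - z‖ := by simpa using norm_sub_norm_le (1 : ℂ) z
  have hδv := one_sub_le_norm_one_sub_mul hx₀ hz.le
  have huv := norm_one_sub_le_two_mul_norm_one_sub_mul hx₀ hx₁.le hz.le
  rw [mobiusWeight_eq (hnorm.trans_le hx₁.le) hz, conj_ofReal, hnorm, inv_div]
  set u := ‖1 - z‖
  set v := ‖1 - x * z‖
  have hδ : 0 < 1 - x := sub_pos.2 hx₁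
  have hu : 0 < u := (sub_pos.2 hz).trans_le hzu
  have hnum : (1 - x ^ 2) * (1 - ‖z‖ ^ 2) ≤ 2 * (1 - x) * (2 * u) := by
    refine mul_le_mul ?_ ?_ (one_sub_sq_norm_nonneg hz.le) (by positivity)
    · nlinarith
    · nlinarith [norm_nonneg z]
  refine (div_le_div_of_nonneg_right hnum (sq_nonneg v)).trans ?_
  rw [mul_min_of_nonneg _ _ (by norm_num), le_min_iff]
  constructor
  · calc 2 * (1 - x) * (2 * u) / v ^ 2 ≤ 2 * (1 - x) * (2 * u) / (1 - x) ^ 2 := by gcongr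
      _ = 4 * (u / (1 - x)) := by field_simp; ring
      _ ≤ 16 * (u / (1 - x)) := by gcongr; norm_num
  · calc 2 * (1 - x) * (2 * u) / v ^ 2 ≤ 2 * (1 - x) * (2 * u) / (u / 2) ^ 2 := by
          gcongr
          linarith
      _ = 16 * ((1 - x) / u) := by field_simp; ring

/-- The profile `s⁻² min(s, s⁻¹)^p`. Evaluated at `s = |1 - z| / (1 - x)`, it dominates
`|1 - z|⁻² (1 - |σ_x(z)|²)^p` up to scaling, and its integral over `ℂ` is finite. -/
noncomputable def mobiusProfile (p s : ℝ) : ℝ := (min s s⁻¹) ^ p / s ^ 2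

theorem mobiusProfile_nonneg (p : ℝ) {s : ℝ} (hs : 0 ≤ s) : 0 ≤ mobiusProfile p s := by
  have : 0 ≤ min s s⁻¹ := le_min hs (inv_nonneg.2 hs)
  unfold mobiusProfile
  positivity

theorem integrable_mobiusProfile_norm {p : ℝ} (hp : 0 < p) :
    Integrable fun z : ℂ ↦ mobiusProfile p ‖z‖ := by
  rw [integrable_fun_norm_addHaar, finrank_real_complex, ← Set.Ioc_union_Ioi_eq_Ioi zero_le_one,
    integrableOn_union]
  simp only [Nat.add_one_sub_one, pow_one, smul_eq_mul, mobiusProfile]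
  constructor
  · refine (intervalIntegral.intervalIntegrable_rpow' (r := p - 1) (by linarith)).1.congr_fun
      (fun s hs ↦ ?_) measurableSet_Ioc
    have hs₀ : 0 < s := hs.1
    dsimp only
    rw [min_eq_left (hs.2.trans ((one_le_inv₀ hs₀).2 hs.2)), Real.rpow_sub_one hs₀.ne']
    field_simp
  · refine (integrableOn_Ioi_rpow_of_lt (a := -p - 1) (by linarith) one_pos).congr_fun
      (fun s (hs : 1 < s) ↦ ?_) measurableSet_Ioi
    have hs₀ : 0 < s := one_pos.trans hs
    dsimp only
    rw [min_eq_right ((inv_le_one_of_one_le₀ hs.le).trans hs.le), Real.inv_rpow hs₀.le,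
      Real.rpow_sub_one hs₀.ne', Real.rpow_neg hs₀.le]
    field_simp

theorem sq_norm_const_mul_inv_mul_mobiusWeight_rpow_le (C : ℝ) {p : ℝ} (hp : 0 ≤ p)
    (hx₀ : 0 ≤ x) (hx₁ : x < 1) (hz : ‖z‖ < 1) :
    ‖(C : ℂ) * (1 - z)⁻¹‖ ^ 2 * mobiusWeight x z ^ p ≤
      C ^ 2 * 16 ^ p / (1 - x) ^ 2 * mobiusProfile p (‖1 - z‖ / (1 - x)) := by
  have hδ : 0 < 1 - x := sub_pos.2 hx₁
  have hu : 0 < ‖1 - z‖ := (sub_pos.2 hz).trans_le (by simpa using norm_sub_norm_le (1 : ℂ) z)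
  have hx : ‖(x : ℂ)‖ < 1 := by rwa [norm_real, Real.norm_of_nonneg hx₀]
  have hs : 0 ≤ min (‖1 - z‖ / (1 - x)) (‖1 - z‖ / (1 - x))⁻¹ :=
    le_min (by positivity) (by positivity)
  calc ‖(C : ℂ) * (1 - z)⁻¹‖ ^ 2 * mobiusWeight x z ^ p
      ≤ ‖(C : ℂ) * (1 - z)⁻¹‖ ^ 2 *
          (16 * min (‖1 - z‖ / (1 - x)) (‖1 - z‖ / (1 - x))⁻¹) ^ p := by
        have := mobiusWeight_nonneg hx.le hz
        gcongr
        exact mobiusWeight_ofReal_le hx₀ hx₁ hz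
    _ = C ^ 2 * 16 ^ p / (1 - x) ^ 2 * mobiusProfile p (‖1 - z‖ / (1 - x)) := by
        rw [Real.mul_rpow (by norm_num) hs, norm_mul, norm_inv, norm_real, mul_pow,
          Real.norm_eq_abs, sq_abs, mobiusProfile]
        field_simp

end Kernel

theorem HasDiskSeries.memQp {p C : ℝ} {f : ℂ → ℂ} {c : ℕ → ℂ} (hp : 0 < p)
    (hf : HasDiskSeries f c) (hC : ∀ n : ℕ, n * ‖c n‖ ≤ C) : MemQp p f := by
  refine ⟨hf.differentiableOn, C ^ 2 * 16 ^ p * ∫ z : ℂ, mobiusProfile p ‖z‖, fun a ha ↦ ?_⟩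
  have ha' : ‖a‖ < 1 := mem_ball_zero_iff.1 ha
  have hδ : 0 < 1 - ‖a‖ := sub_pos.2 ha'
  have hcoeff (n : ℕ) : ‖((n + 1) * c (n + 1) : ℂ)‖ ≤ C := by
    have h := hC (n + 1)
    rwa [← Complex.norm_natCast, ← norm_mul, Nat.cast_succ] at h
  calc ∫⁻ z in ball (0 : ℂ) 1, ENNReal.ofReal (‖deriv f z‖ ^ 2 * mobiusWeight a z ^ p)
      ≤ ∫⁻ z in ball (0 : ℂ) 1,
          ENNReal.ofReal (‖(C : ℂ) * (1 - z)⁻¹‖ ^ 2 * mobiusWeight ‖a‖ z ^ p) :=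
        hf.deriv.lintegral_sq_norm_mul_mobiusWeight_le (const_mul_inv_one_sub C) hcoeff hp ha'
    _ ≤ ∫⁻ z in ball (0 : ℂ) 1, ENNReal.ofReal (C ^ 2 * 16 ^ p / (1 - ‖a‖) ^ 2 *
          mobiusProfile p (‖1 - z‖ / (1 - ‖a‖))) :=
        setLIntegral_mono' measurableSet_ball fun z hz ↦ ENNReal.ofReal_le_ofReal <|
          sq_norm_const_mul_inv_mul_mobiusWeight_rpow_le C hp.le (norm_nonneg a) ha'
            (mem_ball_zero_iff.1 hz)
    _ ≤ ∫⁻ z, ENNReal.ofReal (C ^ 2 * 16 ^ p / (1 - ‖a‖) ^ 2 *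
          mobiusProfile p (‖1 - z‖ / (1 - ‖a‖))) := setLIntegral_le_lintegral _ _
    _ = ENNReal.ofReal (C ^ 2 * 16 ^ p * ∫ z : ℂ, mobiusProfile p ‖z‖) := by
        simp only [ENNReal.ofReal_mul (show 0 ≤ C ^ 2 * 16 ^ p / (1 - ‖a‖) ^ 2 by positivity)]
        rw [lintegral_const_mul' _ _ ENNReal.ofReal_ne_top,
          lintegral_comp_norm_sub_div volume (integrable_mobiusProfile_norm hp)
            (fun _ ↦ mobiusProfile_nonneg p) 1 hδ, finrank_real_complex,
          ← ENNReal.ofReal_mul (by positivity)]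
        congr 1
        field_simp

/-- For `0 < p < ∞` and `f(z) = ∑ aₙ zⁿ` with `(aₙ)` a nonincreasing sequence of
nonnegative reals, `f ∈ Q_p` iff `aₙ = O(1/n)`. -/
theorem statement11 (p : ℝ) (hp : 0 < p) (a : ℕ → ℝ)
    (hmono : Antitone a) (hpos : ∀ n, 0 ≤ a n) :
    MemQp p (fun z : ℂ => ∑' n : ℕ, (a n : ℂ) * z ^ n)
      ↔ ∃ C : ℝ, ∀ n : ℕ, (n : ℝ) * a n ≤ C := by
  have hnorm (n : ℕ) : ‖(a n : ℂ)‖ = a n := by rw [norm_real, Real.norm_of_nonneg (hpos n)]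
  have hseries : HasDiskSeries (fun z ↦ ∑' n, (a n : ℂ) * z ^ n) fun n ↦ a n :=
    .of_norm_le fun n ↦ (hnorm n).trans_le (hmono n.zero_le)
  constructor
  · exact fun h ↦ (h.memBloch hp.le).exists_mul_coeff_le hseries hmono hpos
  · rintro ⟨C, hC⟩
    exact hseries.memQp hp fun n ↦ by simpa only [hnorm] using hC n
end

section
/- Let μ be a positive Borel measure on [0,1) regarded as a measure on 𝔻. Then μ is a Hankel measure (i.e., |∫ f² dμ| ≤ C‖f‖²_{H²} for all f ∈ H²) if and only if μ[n] = O(1/n). -/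
open MeasureTheory Complex Metric Real

/-- A positive Borel measure `μ` on `[0,1)`, viewed as a measure on the segment
`[0,1) ⊂ 𝔻`, is a Hankel measure: there is `C` with `|∫ f² dμ| ≤ C ‖f‖²_{H²}`
for all `f ∈ H²`, phrased by testing against every bound `M` on `‖f‖²_{H²}`. -/
def IsHankelMeasureOnSegment (μ : Measure ℝ) : Prop :=
  ∃ C : ℝ, ∀ f : ℂ → ℂ, DifferentiableOn ℂ f (Metric.ball 0 1) →
    ∀ M : ℝ,
      (∀ r ∈ Set.Ioo (0 : ℝ) 1,
        (2 * π)⁻¹ * (∫ θ in (0 : ℝ)..(2 * π),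
          ‖f ((r : ℂ) * Complex.exp (θ * Complex.I))‖ ^ 2) ≤ M) →
      ‖∫ t, f (t : ℂ) ^ 2 ∂μ‖ ≤ C * M

/-!
Expanding `f = ∑ aₙ zⁿ` gives `∫ |f|² dμ ≤ ∑ⱼ ∑ₖ |aⱼ| |aₖ| μ[j + k]`. If `μ[n] = O(1/n)`, this is
dominated by the Hilbert form `∑ⱼ ∑ₖ |aⱼ| |aₖ| / (j + k + 1)`, which is at most `4 ∑ |aₙ|²`, that
is, `4 ‖f‖²` by Parseval. The bound on the Hilbert form reduces to Hardy's inequality: adding up the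
form along the shells `max j k = n`, each shell is at most twice `|aₙ|` times the average of
`|a₀|, …, |aₙ|`.

Conversely, `f = 1 + z + ⋯ + zⁿ` has squared norm `n + 1`, while `f(t)² ≥ (n + 1)² tⁿ` for `t ≥ 0`
by Cauchy-Schwarz, so testing the Hankel condition on `f` gives `(n + 1) μ[n] ≤ C`.
-/

section

open Filter Finset
open scoped ENNReal NNReal Topology

section HilbertInequality

/-- Hardy's inequality with the remainder `(∑ aₖ)² / N`, which makes an induction on `N` close: its
increment absorbs the new term up to a square. -/
theorem sum_mul_average_add_sq_div_le (a : ℕ → ℝ) (N : ℕ) :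
    2 * ∑ n ∈ range N, a n * (∑ k ∈ range (n + 1), a k) / (n + 1)
      + (∑ k ∈ range N, a k) ^ 2 / N ≤ 4 * ∑ n ∈ range N, a n ^ 2 := by
  induction N with
  | zero => simp
  | succ N ih =>
    set s := ∑ k ∈ range N, a k with hs
    have hincrement : 2 * (a N * (s + a N) / (N + 1)) + (s + a N) ^ 2 / (N + 1)
        ≤ s ^ 2 / N + 4 * a N ^ 2 := by
      rcases N.eq_zero_or_pos with rfl | hN
      · simp only [hs, range_zero, sum_empty, Nat.cast_zero, zero_add, div_one, div_zero]
        nlinarith [sq_nonneg (a 0)]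
      · have hdiff : s ^ 2 / N + 4 * a N ^ 2
            - (2 * (a N * (s + a N) / (N + 1)) + (s + a N) ^ 2 / (N + 1))
            = ((2 * N * a N - s) ^ 2 + N * a N ^ 2) / (N * (N + 1)) := by
          field_simp
          ring
        rw [← sub_nonneg, hdiff]
        positivity
    simp only [sum_range_succ _ N, ← hs, Nat.cast_succ]
    linarith

theorem sum_mul_average_le (a : ℕ → ℝ) (N : ℕ) :
    ∑ n ∈ range N, a n * (∑ k ∈ range (n + 1), a k) / (n + 1)
      ≤ 2 * ∑ n ∈ range N, a n ^ 2 := by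
  have hrem : 0 ≤ (∑ k ∈ range N, a k) ^ 2 / N := by positivity
  linarith [sum_mul_average_add_sq_div_le a N]

theorem sum_hilbert_le_sum_mul_average {a : ℕ → ℝ} (ha : ∀ n, 0 ≤ a n) (N : ℕ) :
    ∑ j ∈ range N, ∑ k ∈ range N, a j * a k / (j + k + 1)
      ≤ 2 * ∑ n ∈ range N, a n * (∑ k ∈ range (n + 1), a k) / (n + 1) := by
  induction N with
  | zero => simp
  | succ N ih =>
    have hrow : ∑ k ∈ range (N + 1), a N * a k / ((N : ℝ) + k + 1)
        ≤ a N * (∑ k ∈ range (N + 1), a k) / (N + 1) := by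
      rw [mul_sum, sum_div]
      refine sum_le_sum fun k _ => ?_
      have hnum : 0 ≤ a N * a k := mul_nonneg (ha N) (ha k)
      gcongr
      linarith [k.cast_nonneg (α := ℝ)]
    have hcol : ∑ j ∈ range N, a j * a N / ((j : ℝ) + N + 1)
        ≤ ∑ k ∈ range (N + 1), a N * a k / ((N : ℝ) + k + 1) := by
      have hdiag : 0 ≤ a N * a N / ((N : ℝ) + N + 1) :=
        div_nonneg (mul_self_nonneg _) (by positivity)
      have hsymm : ∀ j : ℕ, a j * a N / ((j : ℝ) + N + 1) = a N * a j / ((N : ℝ) + j + 1) :=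
        fun j => by rw [mul_comm, add_comm (j : ℝ)]
      simp only [sum_range_succ, hsymm]
      linarith
    have hsplit : ∑ j ∈ range (N + 1), ∑ k ∈ range (N + 1), a j * a k / ((j : ℝ) + k + 1)
        = ∑ j ∈ range N, ∑ k ∈ range N, a j * a k / ((j : ℝ) + k + 1)
          + ∑ j ∈ range N, a j * a N / ((j : ℝ) + N + 1)
          + ∑ k ∈ range (N + 1), a N * a k / ((N : ℝ) + k + 1) := by
      rw [sum_range_succ _ N]
      simp only [sum_range_succ _ N, sum_add_distrib]
    rw [hsplit, sum_range_succ (fun n : ℕ => a n * (∑ k ∈ range (n + 1), a k) / ((n : ℝ) + 1))]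
    linarith

theorem sum_hilbert_le {a : ℕ → ℝ} (ha : ∀ n, 0 ≤ a n) (N : ℕ) :
    ∑ j ∈ range N, ∑ k ∈ range N, a j * a k / (j + k + 1) ≤ 4 * ∑ n ∈ range N, a n ^ 2 := by
  linarith [sum_hilbert_le_sum_mul_average ha N, sum_mul_average_le a N]

theorem tsum_hilbert_le (a : ℕ → ℝ≥0∞) :
    ∑' (j : ℕ) (k : ℕ), a j * a k / (j + k + 1) ≤ 4 * ∑' n, a n ^ 2 := by
  by_cases htop : ∃ n, a n = ∞
  · obtain ⟨n, hn⟩ := htop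
    have hright : ∑' n, a n ^ 2 = ∞ := ENNReal.tsum_eq_top_of_eq_top ⟨n, by simp [hn]⟩
    rw [hright, ENNReal.mul_top four_ne_zero]
    exact le_top
  push Not at htop
  lift a to ℕ → ℝ≥0 using htop
  have hsum (N : ℕ) : ∑ j ∈ range N, ∑ k ∈ range N, (a j * a k / (j + k + 1) : ℝ≥0∞)
      ≤ 4 * ∑ n ∈ range N, (a n : ℝ≥0∞) ^ 2 := by
    have hreal := sum_hilbert_le (fun n => (a n).coe_nonneg) N
    have hcoe (j k : ℕ) : (a j * a k / (j + k + 1) : ℝ≥0∞) = ↑(a j * a k / (j + k + 1)) := by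
      rw [ENNReal.coe_div (by positivity)]
      push_cast
      rfl
    simp only [hcoe]
    exact_mod_cast hreal
  rw [← ENNReal.tsum_prod, ENNReal.tsum_eq_iSup_sum' (fun N => range N ×ˢ range N)]
  · refine iSup_le fun N => ?_
    rw [sum_product]
    exact (hsum N).trans (by gcongr; exact ENNReal.sum_le_tsum _)
  · intro t
    obtain ⟨N, hN⟩ := (t.image Prod.fst ∪ t.image Prod.snd).exists_nat_subset_range
    refine ⟨N, fun p hp => mem_product.2 ⟨hN ?_, hN ?_⟩⟩
    · exact mem_union_left _ (mem_image_of_mem _ hp)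
    · exact mem_union_right _ (mem_image_of_mem _ hp)

end HilbertInequality

theorem lintegral_tsum_mul_pow_sq_le {X : Type*} [MeasurableSpace X] {μ : Measure X}
    {g : X → ℝ≥0∞} (hg : AEMeasurable g μ) {D : ℝ≥0∞}
    (hD : ∀ n : ℕ, ∫⁻ x, g x ^ n ∂μ ≤ D / (n + 1)) (a : ℕ → ℝ≥0∞) :
    ∫⁻ x, (∑' n, a n * g x ^ n) ^ 2 ∂μ ≤ D * (4 * ∑' n, a n ^ 2) := by
  calc ∫⁻ x, (∑' n, a n * g x ^ n) ^ 2 ∂μ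
      = ∫⁻ x, ∑' (j : ℕ) (k : ℕ), a j * a k * g x ^ (j + k) ∂μ := by
        refine lintegral_congr fun x => ?_
        rw [sq, ← ENNReal.tsum_mul_right]
        refine tsum_congr fun j => ?_
        rw [← ENNReal.tsum_mul_left]
        exact tsum_congr fun k => by ring
    _ = ∑' (j : ℕ) (k : ℕ), a j * a k * ∫⁻ x, g x ^ (j + k) ∂μ := by
        have hmeas (j k : ℕ) : AEMeasurable (fun x => a j * a k * g x ^ (j + k)) μ :=
          (hg.pow_const _).const_mul _
        rw [lintegral_tsum fun j => AEMeasurable.tsum (hmeas j)]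
        refine tsum_congr fun j => ?_
        rw [lintegral_tsum (hmeas j)]
        exact tsum_congr fun k => lintegral_const_mul'' _ (hg.pow_const _)
    _ ≤ ∑' (j : ℕ) (k : ℕ), D * (a j * a k / (j + k + 1)) := by
        refine ENNReal.tsum_le_tsum fun j => ENNReal.tsum_le_tsum fun k => ?_
        calc a j * a k * ∫⁻ x, g x ^ (j + k) ∂μ
            ≤ a j * a k * (D / ((j + k : ℕ) + 1)) := by gcongr; exact hD _
          _ = D * (a j * a k / (j + k + 1)) := by
            simp only [div_eq_mul_inv, Nat.cast_add]
            ring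
    _ = D * ∑' (j : ℕ) (k : ℕ), a j * a k / (j + k + 1) := by
        simp only [ENNReal.tsum_mul_left]
    _ ≤ D * (4 * ∑' n, a n ^ 2) := by gcongr; exact tsum_hilbert_le a

section HardySpace

theorem circleAverage_sq_norm_sum (a : ℕ → ℂ) (r : ℝ) (N : ℕ) :
    circleAverage (fun z => ‖∑ n ∈ range N, a n * z ^ n‖ ^ 2) 0 r
      = ∑ n ∈ range N, (‖a n‖ * r ^ n) ^ 2 := by
  let p : Polynomial ℂ := ∑ n ∈ range N, Polynomial.monomial n (a n * r ^ n)
  have hcoeff (n : ℕ) : p.coeff n = if n ∈ range N then a n * r ^ n else 0 := by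
    simp [p, Polynomial.finsetSum_coeff, Polynomial.coeff_monomial]
  have hsupp : p.support ⊆ range N := fun n hn => by
    by_contra h
    exact Polynomial.mem_support_iff.1 hn (by rw [hcoeff, if_neg h])
  calc circleAverage (fun z => ‖∑ n ∈ range N, a n * z ^ n‖ ^ 2) 0 r
      = circleAverage (fun z => ‖p.eval z‖ ^ 2) 0 1 := by
        rw [circleAverage_eq_circleAverage_zero_one]
        simp [p, Polynomial.eval_finsetSum, mul_pow, mul_assoc]
    _ = ∑ n ∈ range N, ‖p.coeff n‖ ^ 2 := by
        rw [← Polynomial.sum_sq_norm_coeff_eq_circleAverage]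
        refine sum_subset hsupp fun n _ hn => ?_
        rw [Polynomial.notMem_support_iff.1 hn, norm_zero, zero_pow two_ne_zero]
    _ = ∑ n ∈ range N, (‖a n‖ * r ^ n) ^ 2 := by
        refine sum_congr rfl fun n hn => ?_
        rw [hcoeff, if_pos hn, norm_mul, norm_pow, norm_real, mul_pow, mul_pow, ← norm_pow,
          ← norm_pow, Real.norm_eq_abs, sq_abs]

theorem tendsto_circleAverage_sq_norm_partialSum {f : ℂ → ℂ} {a : ℕ → ℂ} {r : ℝ}
    (hf : ∀ z ∈ sphere (0 : ℂ) |r|, HasSum (fun n => a n * z ^ n) (f z)) :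
    Tendsto (fun N => circleAverage (fun z => ‖∑ n ∈ range N, a n * z ^ n‖ ^ 2) 0 r) atTop
      (𝓝 (circleAverage (fun z => ‖f z‖ ^ 2) 0 r)) := by
  have hsummable : Summable fun n => ‖a n‖ * |r| ^ n := by
    simpa using (hf r (by simp)).summable.norm
  have hcircle (θ : ℝ) : circleMap 0 r θ ∈ sphere (0 : ℂ) |r| := by simp
  refine (intervalIntegral.tendsto_integral_filter_of_dominated_convergence
    (fun _ => (∑' n, ‖a n‖ * |r| ^ n) ^ 2) ?_ ?_ intervalIntegrable_const ?_).const_smul _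
  · exact .of_forall fun N => Continuous.aestronglyMeasurable (by fun_prop)
  · refine .of_forall fun N => .of_forall fun θ _ => ?_
    rw [norm_pow, norm_norm]
    gcongr
    calc ‖∑ n ∈ range N, a n * circleMap 0 r θ ^ n‖
        ≤ ∑ n ∈ range N, ‖a n‖ * |r| ^ n := by
          refine norm_sum_le_of_le _ fun n _ => ?_
          rw [norm_mul, norm_pow, mem_sphere_zero_iff_norm.1 (hcircle θ)]
      _ ≤ ∑' n, ‖a n‖ * |r| ^ n := hsummable.sum_le_tsum _ fun n _ => by positivity
  · exact .of_forall fun θ _ => ((hf _ (hcircle θ)).tendsto_sum_nat.norm).pow 2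

theorem hasSum_sq_norm_coeff_circleAverage {f : ℂ → ℂ} {a : ℕ → ℂ} {r : ℝ}
    (hf : ∀ z ∈ sphere (0 : ℂ) |r|, HasSum (fun n => a n * z ^ n) (f z)) :
    HasSum (fun n => (‖a n‖ * r ^ n) ^ 2) (circleAverage (fun z => ‖f z‖ ^ 2) 0 r) := by
  rw [hasSum_iff_tendsto_nat_of_nonneg fun n => by positivity]
  simpa only [circleAverage_sq_norm_sum] using tendsto_circleAverage_sq_norm_partialSum hf

/-- The squared norm of `f` in the Hardy space `H²` of the unit disk: the supremum of the means of
`|f|²` over the circles `|z| = r < 1`. It takes values in `[0, ∞]`, so that a holomorphic `f`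
belongs to `H²` exactly when `hardyNormSq f` is finite. -/
noncomputable def hardyNormSq (f : ℂ → ℂ) : ℝ≥0∞ :=
  ⨆ r ∈ Set.Ioo (0 : ℝ) 1, ENNReal.ofReal (circleAverage (fun z => ‖f z‖ ^ 2) 0 r)

theorem hardyNormSq_le_ofReal_iff {f : ℂ → ℂ} {M : ℝ} (hM : 0 ≤ M) :
    hardyNormSq f ≤ ENNReal.ofReal M ↔ ∀ r ∈ Set.Ioo (0 : ℝ) 1,
      (2 * π)⁻¹ * (∫ θ in (0 : ℝ)..(2 * π), ‖f (r * Complex.exp (θ * I))‖ ^ 2) ≤ M := by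
  simp only [hardyNormSq, iSup₂_le_iff, ENNReal.ofReal_le_ofReal_iff hM, circleAverage_def,
    circleMap_zero, smul_eq_mul]

theorem isHankelMeasureOnSegment_iff {μ : Measure ℝ} :
    IsHankelMeasureOnSegment μ ↔ ∃ C : ℝ, ∀ f : ℂ → ℂ, DifferentiableOn ℂ f (ball 0 1) →
      ∀ M : ℝ, 0 ≤ M → hardyNormSq f ≤ ENNReal.ofReal M → ‖∫ t, f (t : ℂ) ^ 2 ∂μ‖ ≤ C * M := by
  refine exists_congr fun C => forall₃_congr fun f _ M => ?_
  refine ⟨fun h hM hf => h ((hardyNormSq_le_ofReal_iff hM).1 hf), fun h hf => ?_⟩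
  have hmean : 0 ≤ (2 * π)⁻¹ * ∫ θ in (0 : ℝ)..(2 * π),
      ‖f ((2⁻¹ : ℝ) * Complex.exp (θ * I))‖ ^ 2 :=
    mul_nonneg (by positivity)
      (intervalIntegral.integral_nonneg two_pi_pos.le fun θ _ => by positivity)
  have hM : 0 ≤ M := hmean.trans (hf 2⁻¹ (by norm_num))
  exact h hM ((hardyNormSq_le_ofReal_iff hM).2 hf)

theorem hardyNormSq_eq_tsum {f : ℂ → ℂ} {a : ℕ → ℂ}
    (hf : ∀ z ∈ ball (0 : ℂ) 1, HasSum (fun n => a n * z ^ n) (f z)) :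
    hardyNormSq f = ∑' n, ‖a n‖ₑ ^ 2 := by
  have hcircle {r : ℝ} (hr : r ∈ Set.Ioo (0 : ℝ) 1) :
      ENNReal.ofReal (circleAverage (fun z => ‖f z‖ ^ 2) 0 r)
        = ∑' n, (‖a n‖ₑ * ENNReal.ofReal r ^ n) ^ 2 := by
    have hsum := hasSum_sq_norm_coeff_circleAverage (f := f) (a := a) (r := r) fun z hz =>
      hf z (sphere_subset_ball (by rw [abs_of_pos hr.1]; exact hr.2) hz)
    rw [← hsum.tsum_eq, ENNReal.ofReal_tsum_of_nonneg (fun n => by positivity) hsum.summable]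
    refine tsum_congr fun n => ?_
    have hr0 : 0 ≤ r := hr.1.le
    rw [ENNReal.ofReal_pow (by positivity), ENNReal.ofReal_mul (norm_nonneg _), ofReal_norm,
      ENNReal.ofReal_pow hr0]
  apply le_antisymm
  · refine iSup₂_le fun r hr => (hcircle hr).trans_le <| ENNReal.tsum_le_tsum fun n => ?_
    gcongr
    exact mul_le_of_le_one_right' (pow_le_one' (ENNReal.ofReal_le_one.2 hr.2.le) n)
  · rw [ENNReal.tsum_eq_iSup_sum]
    refine iSup_le fun s => ?_
    have hlim : Tendsto (fun r : ℝ => ∑ n ∈ s, (‖a n‖ₑ * ENNReal.ofReal r ^ n) ^ 2) (𝓝[<] 1)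
        (𝓝 (∑ n ∈ s, ‖a n‖ₑ ^ 2)) := by
      refine tendsto_nhdsWithin_of_tendsto_nhds (tendsto_finsetSum _ fun n _ => ?_)
      have hpow : Tendsto (fun r : ℝ => ENNReal.ofReal r ^ n) (𝓝 1) (𝓝 1) := by
        simpa using ENNReal.Tendsto.pow (n := n) (ENNReal.tendsto_ofReal (tendsto_id (x := 𝓝 1)))
      simpa using ENNReal.Tendsto.pow (n := 2)
        (ENNReal.Tendsto.const_mul (a := ‖a n‖ₑ) hpow (.inl one_ne_zero))
    refine le_of_tendsto hlim ?_
    filter_upwards [Ioo_mem_nhdsLT zero_lt_one] with r hr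
    calc ∑ n ∈ s, (‖a n‖ₑ * ENNReal.ofReal r ^ n) ^ 2
        ≤ ∑' n, (‖a n‖ₑ * ENNReal.ofReal r ^ n) ^ 2 := ENNReal.sum_le_tsum s
      _ = ENNReal.ofReal (circleAverage (fun z => ‖f z‖ ^ 2) 0 r) := (hcircle hr).symm
      _ ≤ hardyNormSq f :=
        le_iSup₂ (f := fun (r : ℝ) (_ : r ∈ Set.Ioo (0 : ℝ) 1) =>
          ENNReal.ofReal (circleAverage (fun z => ‖f z‖ ^ 2) 0 r)) r hr

theorem hardyNormSq_sum_range_pow (N : ℕ) :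
    hardyNormSq (fun z => ∑ n ∈ range N, z ^ n) = N := by
  have hf (z : ℂ) : HasSum (fun n => (if n ∈ range N then 1 else 0) * z ^ n)
      (∑ n ∈ range N, z ^ n) := by
    have hsum : ∑ n ∈ range N, z ^ n = ∑ n ∈ range N, (if n ∈ range N then 1 else 0) * z ^ n :=
      sum_congr rfl fun n hn => by rw [if_pos hn, one_mul]
    rw [hsum]
    exact hasSum_sum_of_ne_finset_zero fun n hn => by rw [if_neg hn, zero_mul]
  rw [hardyNormSq_eq_tsum fun z _ => hf z, tsum_eq_sum (s := range N) fun n hn => by simp [hn]]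
  simp +contextual

theorem exists_hasSum_of_differentiableOn_ball {f : ℂ → ℂ} (hf : DifferentiableOn ℂ f (ball 0 1)) :
    ∃ a : ℕ → ℂ, ∀ z ∈ ball (0 : ℂ) 1, HasSum (fun n => a n * z ^ n) (f z) := by
  refine ⟨fun n => (n.factorial : ℂ)⁻¹ * iteratedDeriv n f 0, fun z hz => ?_⟩
  simpa [mul_comm, mul_left_comm] using
    hasSum_taylorSeries_on_ball (c := 0) (r := 1) (f := f) (by simpa using hf) (by simpa using hz)

theorem lintegral_enorm_sq_comp_le_hardyNormSq {X : Type*} [MeasurableSpace X] {μ : Measure X}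
    {φ : X → ℂ} (hφ : AEMeasurable φ μ) (hball : ∀ᵐ x ∂μ, φ x ∈ ball (0 : ℂ) 1) {D : ℝ≥0∞}
    (hD : ∀ n : ℕ, ∫⁻ x, ‖φ x‖ₑ ^ n ∂μ ≤ D / (n + 1)) {f : ℂ → ℂ}
    (hf : DifferentiableOn ℂ f (ball 0 1)) :
    ∫⁻ x, ‖f (φ x)‖ₑ ^ 2 ∂μ ≤ D * (4 * hardyNormSq f) := by
  obtain ⟨a, ha⟩ := exists_hasSum_of_differentiableOn_ball hf
  rw [hardyNormSq_eq_tsum ha]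
  refine le_trans ?_ (lintegral_tsum_mul_pow_sq_le hφ.enorm hD fun n => ‖a n‖ₑ)
  refine lintegral_mono_ae (hball.mono fun x hx => ?_)
  gcongr
  calc ‖f (φ x)‖ₑ = ‖∑' n, a n * φ x ^ n‖ₑ := by rw [(ha _ hx).tsum_eq]
    _ ≤ ∑' n, ‖a n * φ x ^ n‖ₑ := enorm_tsum_le_tsum_enorm
    _ = ∑' n, ‖a n‖ₑ * ‖φ x‖ₑ ^ n := by simp only [enorm_mul, enorm_pow]

end HardySpace

section Moments

variable {μ : Measure ℝ} [IsFiniteMeasure μ]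

theorem integrable_pow_of_ae_mem_Icc (hμ : ∀ᵐ t ∂μ, t ∈ Set.Icc (0 : ℝ) 1) (n : ℕ) :
    Integrable (fun t : ℝ => t ^ n) μ := by
  refine .of_bound (C := 1) (by fun_prop) (hμ.mono fun t ht => ?_)
  rw [norm_pow, Real.norm_of_nonneg ht.1]
  exact pow_le_one₀ ht.1 ht.2

theorem lintegral_enorm_pow_le_of_mul_moment_le (hμ : ∀ᵐ t ∂μ, t ∈ Set.Icc (0 : ℝ) 1) {C : ℝ}
    (hC : ∀ n : ℕ, (n : ℝ) * ∫ t, t ^ n ∂μ ≤ C) (n : ℕ) :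
    ∫⁻ t : ℝ, ‖t‖ₑ ^ n ∂μ ≤ ENNReal.ofReal (C + μ.real Set.univ) / (n + 1) := by
  have hnonneg : ∀ᵐ t ∂μ, 0 ≤ t ^ n := hμ.mono fun t ht => pow_nonneg ht.1 n
  have hmass : ∫ t, t ^ n ∂μ ≤ μ.real Set.univ := by
    simpa using integral_mono_ae (integrable_pow_of_ae_mem_Icc hμ n) (integrable_const 1)
      (hμ.mono fun t ht => pow_le_one₀ ht.1 ht.2)
  calc ∫⁻ t : ℝ, ‖t‖ₑ ^ n ∂μ = ENNReal.ofReal (∫ t, t ^ n ∂μ) := by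
        rw [ofReal_integral_eq_lintegral_ofReal (integrable_pow_of_ae_mem_Icc hμ n) hnonneg]
        refine lintegral_congr_ae (hnonneg.mono fun t ht => ?_)
        simp only [← enorm_pow, Real.enorm_of_nonneg ht]
    _ ≤ ENNReal.ofReal ((C + μ.real Set.univ) / (n + 1)) := by
        gcongr
        rw [le_div_iff₀ (by positivity)]
        linarith [hC n]
    _ = ENNReal.ofReal (C + μ.real Set.univ) / (n + 1) := by
        rw [ENNReal.ofReal_div_of_pos (by positivity)]
        norm_cast

theorem sq_mul_pow_le_sq_geom_sum {t : ℝ} (ht : 0 ≤ t) (n : ℕ) :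
    ((n : ℝ) + 1) ^ 2 * t ^ n ≤ (∑ k ∈ range (n + 1), t ^ k) ^ 2 := by
  calc ((n : ℝ) + 1) ^ 2 * t ^ n = (∑ _k ∈ range (n + 1), √(t ^ n)) ^ 2 := by
        simp [mul_pow, Real.sq_sqrt (pow_nonneg ht n)]
    _ ≤ (∑ k ∈ range (n + 1), t ^ k) * ∑ k ∈ range (n + 1), t ^ (n - k) := by
        refine sum_sq_le_sum_mul_sum_of_sq_le_mul _ (fun k _ => pow_nonneg ht k)
          (fun k _ => pow_nonneg ht _) fun k hk => ?_
        rw [Real.sq_sqrt (pow_nonneg ht n), ← pow_add,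
          Nat.add_sub_of_le (Nat.lt_succ_iff.1 (mem_range.1 hk))]
    _ = (∑ k ∈ range (n + 1), t ^ k) ^ 2 := by
        rw [sq]
        congr 1
        simpa using sum_range_reflect (fun k => t ^ k) (n + 1)

theorem sq_mul_moment_le_integral_sq_geom_sum (hμ : ∀ᵐ t ∂μ, t ∈ Set.Icc (0 : ℝ) 1) (n : ℕ) :
    ((n : ℝ) + 1) ^ 2 * ∫ t, t ^ n ∂μ ≤ ∫ t, (∑ k ∈ range (n + 1), t ^ k) ^ 2 ∂μ := by
  rw [← integral_const_mul]
  refine integral_mono_ae ((integrable_pow_of_ae_mem_Icc hμ n).const_mul _) ?_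
    (hμ.mono fun t ht => sq_mul_pow_le_sq_geom_sum ht.1 n)
  simp only [sq, sum_mul_sum, ← pow_add]
  exact integrable_finsetSum _ fun j _ => integrable_finsetSum _ fun k _ =>
    integrable_pow_of_ae_mem_Icc hμ _

theorem IsHankelMeasureOnSegment.exists_mul_moment_le (h : IsHankelMeasureOnSegment μ)
    (hμ : ∀ᵐ t ∂μ, t ∈ Set.Icc (0 : ℝ) 1) : ∃ C : ℝ, ∀ n : ℕ, (n : ℝ) * ∫ t, t ^ n ∂μ ≤ C := by
  obtain ⟨C, hC⟩ := isHankelMeasureOnSegment_iff.1 h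
  refine ⟨C, fun n => ?_⟩
  have hreal : ∫ t : ℝ, (∑ k ∈ range (n + 1), (t : ℂ) ^ k) ^ 2 ∂μ
      = ((∫ t : ℝ, (∑ k ∈ range (n + 1), t ^ k) ^ 2 ∂μ : ℝ) : ℂ) := by
    rw [← integral_complex_ofReal]
    simp only [ofReal_pow, ofReal_sum]
  have htest : ∫ t : ℝ, (∑ k ∈ range (n + 1), t ^ k) ^ 2 ∂μ ≤ C * (n + 1 : ℕ) := by
    have hbound := hC (fun z => ∑ k ∈ range (n + 1), z ^ k)
      (Differentiable.differentiableOn (by fun_prop)) (n + 1 : ℕ) (Nat.cast_nonneg _)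
      (by rw [hardyNormSq_sum_range_pow, ENNReal.ofReal_natCast])
    rw [hreal, norm_real] at hbound
    exact (le_abs_self _).trans hbound
  have hmoment : ((n : ℝ) + 1) * ∫ t, t ^ n ∂μ ≤ C := by
    refine le_of_mul_le_mul_left ?_ (n.cast_add_one_pos (α := ℝ))
    push_cast at htest
    linarith [sq_mul_moment_le_integral_sq_geom_sum hμ n]
  have hnonneg : 0 ≤ ∫ t, t ^ n ∂μ :=
    integral_nonneg_of_ae (hμ.mono fun t ht => pow_nonneg ht.1 n)
  linarith

theorem isHankelMeasureOnSegment_of_mul_moment_le (hμ : ∀ᵐ t ∂μ, t ∈ Set.Ico (0 : ℝ) 1) {C : ℝ}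
    (hC : ∀ n : ℕ, (n : ℝ) * ∫ t, t ^ n ∂μ ≤ C) : IsHankelMeasureOnSegment μ := by
  set D := C + μ.real Set.univ
  have hball : ∀ᵐ t : ℝ ∂μ, (t : ℂ) ∈ ball (0 : ℂ) 1 := hμ.mono fun t ht => by
    simp [abs_of_nonneg ht.1, ht.2]
  have hD (n : ℕ) : ∫⁻ t : ℝ, ‖(t : ℂ)‖ₑ ^ n ∂μ ≤ ENNReal.ofReal D / (n + 1) := by
    have hcoe (t : ℝ) : ‖(t : ℂ)‖ₑ = ‖t‖ₑ := by simp only [enorm_eq_nnnorm, nnnorm_real]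
    simpa only [hcoe] using lintegral_enorm_pow_le_of_mul_moment_le
      (hμ.mono fun t ht => Set.Ico_subset_Icc_self ht) hC n
  have hD0 : 0 ≤ D := add_nonneg (by simpa using hC 0) measureReal_nonneg
  refine isHankelMeasureOnSegment_iff.2 ⟨4 * D, fun f hf M hM0 hM => ?_⟩
  rw [← ENNReal.ofReal_le_ofReal_iff (by positivity), ofReal_norm]
  calc ‖∫ t, f (t : ℂ) ^ 2 ∂μ‖ₑ
      ≤ ∫⁻ t : ℝ, ‖f (t : ℂ)‖ₑ ^ 2 ∂μ := by
        simp only [← enorm_pow]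
        exact enorm_integral_le_lintegral_enorm _
    _ ≤ ENNReal.ofReal D * (4 * hardyNormSq f) :=
        lintegral_enorm_sq_comp_le_hardyNormSq (by fun_prop) hball hD hf
    _ ≤ ENNReal.ofReal D * (4 * ENNReal.ofReal M) := by gcongr
    _ = ENNReal.ofReal (4 * D * M) := by
        rw [ENNReal.ofReal_mul (by positivity), ENNReal.ofReal_mul zero_le_four,
          ENNReal.ofReal_ofNat]
        ring

end Moments

end

/-- A positive finite Borel measure `μ` on `[0,1)` (regarded as a measure on `𝔻`)
is a Hankel measure iff `μ[n] = O(1/n)`. -/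
theorem statement15 (μ : Measure ℝ) [IsFiniteMeasure μ]
    (hsupp : ∀ᵐ t ∂μ, t ∈ Set.Ico (0 : ℝ) 1) :
    IsHankelMeasureOnSegment μ ↔ ∃ C : ℝ, ∀ n : ℕ, (n : ℝ) * ∫ t, t ^ n ∂μ ≤ C := by
  constructor
  · intro h
    exact h.exists_mul_moment_le (hsupp.mono fun t ht => Set.Ico_subset_Icc_self ht)
  · rintro ⟨C, hC⟩
    exact isHankelMeasureOnSegment_of_mul_moment_le hsupp hC
end
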